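/- Assume hypothesis (H). Then there exist δ₀ ∈ (0,1) and, for each δ ∈ (0,δ₀), a constant C ∈ ℝ such that for every ε ∈ (−δ, −δ/2) and every u ∈ C¹(closed 𝔻) satisfying ∫_{∂𝔻} e^{u/2} = 1 and ∫_{∂𝔻} x₁ e^{u/2} = ∫_{∂𝔻} x₂ e^{u/2} = 0, one has I_ε(u) ≥ (1/5)∫_𝔻 |∇u|² + C. In particular I_ε is bounded from below on this constrained set, uniformly for ε ∈ (−δ, −δ/2). -/

import Mathlib

open MeasureTheory Real Filter

noncomputable section

/-- The open unit disk in ℝ² ≅ ℂ. -/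
def unitDisk : Set ℂ := Metric.ball 0 1

/-- The unit circle ∂𝔻. -/
def unitCircle : Set ℂ := Metric.sphere 0 1

/-- The closed unit disk. -/
def closedUnitDisk : Set ℂ := Metric.closedBall 0 1

/-- Directional derivative of `u` at `x` in direction `v`. -/
def pd (u : ℂ → ℝ) (v x : ℂ) : ℝ := fderiv ℝ u x v

/-- Laplacian of `u` at `x`. -/
def lap (u : ℂ → ℝ) (x : ℂ) : ℝ :=
  fderiv ℝ (fun y => pd u 1 y) x 1 + fderiv ℝ (fun y => pd u Complex.I y) x Complex.I

/-- Squared norm of the gradient, |∇u|². -/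
def gradSq (u : ℂ → ℝ) (x : ℂ) : ℝ := pd u 1 x ^ 2 + pd u Complex.I x ^ 2

/-- Outward normal derivative ∂_ν u(x) = ∇u(x)·x at a boundary point. -/
def nderiv (u : ℂ → ℝ) (x : ℂ) : ℝ := x.re * pd u 1 x + x.im * pd u Complex.I x

/-- Tangential derivative ∂_τ u(x) = ∇u(x)·(−x₂,x₁) at a boundary point. -/
def tderiv (u : ℂ → ℝ) (x : ℂ) : ℝ := -x.im * pd u 1 x + x.re * pd u Complex.I x

/-- Unit-speed parametrization of the unit circle. -/
def bpt (θ : ℝ) : ℂ := Complex.exp ((θ : ℂ) * Complex.I)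

/-- Integral over ∂𝔻 with respect to arclength. -/
def bint (f : ℂ → ℝ) : ℝ := ∫ θ in (0:ℝ)..(2 * π), f (bpt θ)

/-- A solution of the prescribed curvature problem for `(K, h)`. -/
def IsSolution (K h u : ℂ → ℝ) : Prop :=
  ContDiff ℝ 2 u ∧
  (∀ x ∈ unitDisk, -lap u x = 2 * K x * Real.exp (u x)) ∧
  (∀ x ∈ unitCircle, nderiv u x + 2 = 2 * h x * Real.exp (u x / 2))

/-- The auxiliary function Φ = H + √(H² + K). -/
def Phi (K H : ℂ → ℝ) (x : ℂ) : ℝ := H x + Real.sqrt (H x ^ 2 + K x)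

/-- `H` is the harmonic extension of `h`, C¹ up to the boundary. -/
def IsHarmExt (h H : ℂ → ℝ) : Prop :=
  ContDiff ℝ 1 H ∧ ContDiffOn ℝ 2 H unitDisk ∧
  (∀ x ∈ unitDisk, lap H x = 0) ∧ ∀ x ∈ unitCircle, H x = h x

/-- K_ε. -/
def Keps (K : ℂ → ℝ) (ε : ℝ) (x : ℂ) : ℝ := (K x - ε / 2) / (1 + ε)

/-- h_ε. -/
def heps (h : ℂ → ℝ) (ε : ℝ) (x : ℂ) : ℝ := h x / (1 + ε)

/-- K̃_ε. -/
def Ktil (ε : ℝ) : ℝ := -ε / (2 * (1 + ε))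

/-- h̃_ε. -/
def htil (ε : ℝ) : ℝ := 1 / (1 + ε)

/-- A solution of the perturbed problem (P_ε). -/
def IsPerturbedSolution (K h : ℂ → ℝ) (ε : ℝ) (u : ℂ → ℝ) : Prop :=
  ContDiff ℝ 2 u ∧
  (∀ x ∈ unitDisk, -lap u x + 2 * Ktil ε = 2 * Keps K ε x * Real.exp (u x)) ∧
  (∀ x ∈ unitCircle, nderiv u x + 2 * htil ε = 2 * heps h ε x * Real.exp (u x / 2))

/-- The energy functional I. -/
def Ifun (K h u : ℂ → ℝ) : ℝ :=
  (∫ x in unitDisk, ((1/2) * gradSq u x - 2 * K x * Real.exp (u x))) +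
  bint (fun x => 2 * u x - 4 * h x * Real.exp (u x / 2))

/-- The perturbation term T. -/
def Tfun (u : ℂ → ℝ) : ℝ :=
  ∫ x in unitDisk, ((1/2) * gradSq u x + Real.exp (u x) - u x)

/-- The perturbed functional I_ε. -/
def Ieps (K h : ℂ → ℝ) (ε : ℝ) (u : ℂ → ℝ) : ℝ := (Ifun K h u + ε * Tfun u) / (1 + ε)

/-!
Put `φ = u / 2`. Truncate the analytic half of the Fourier series of `φ` on the circle to a
polynomial `f`, so that `e^φ` is, up to a constant factor, the limit of `|e^f|²`. The quantity
`(∫ e^φ)² - |∫ e^φ z|²` is then the limit of the Gram determinants of `e^f` and `z e^f`. The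
identities `z g' = z f' g` for `g = e^f` and `z g' = g + z f' g` for `g = z e^f` give a recurrence
for the `2 × 2` minors of their Taylor coefficients; summed along antidiagonals it yields an
inequality of Lebedev-Milin type,
`(∫ e^φ)² - |∫ e^φ z|² ≤ 4π² exp ((∫ φ) / π + ∑ k |a_k|²)`,
where `a_k` are the Fourier coefficients of `φ`. Stokes' theorem bounds `4π ∑ k |a_k|²` by the
Dirichlet integral of `φ`.

When the barycenter vanishes the second square disappears. This gives
`∫_{∂𝔻} u ≥ -(∫ |∇u|²) / 8 - C`, half of the loss in the inequality without the constraint, so the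
boundary term `2 ∫ u` of the energy costs only a quarter of the Dirichlet integral. As `K` is
negative, the term `-2 K e^u` absorbs `ε e^u`, and the divergence theorem compares the remaining
mean of `u` over the disk with its boundary mean.
-/

open scoped ComplexConjugate

section Antidiagonal

open Finset (range)
open Finset.HasAntidiagonal (antidiagonal mem_antidiagonal)

theorem sum_antidiagonal_antidiagonal_fst {M β : Type*} [AddMonoid M] [Finset.HasAntidiagonal M]
    [AddCommMonoid β] (m : M) (f : M → M → M → β) :
    ∑ p ∈ antidiagonal m, ∑ r ∈ antidiagonal p.1, f r.1 r.2 p.2 =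
      ∑ p ∈ antidiagonal m, ∑ r ∈ antidiagonal p.2, f p.1 r.1 r.2 := by
  rw [Finset.sum_sigma', Finset.sum_sigma']
  refine Finset.sum_bij' (fun x _ => ⟨(x.2.1, x.2.2 + x.1.2), (x.2.2, x.1.2)⟩)
    (fun x _ => ⟨(x.1.1 + x.2.1, x.2.2), (x.1.1, x.2.1)⟩) ?_ ?_ ?_ ?_ ?_ <;>
  · rintro ⟨⟨_, _⟩, ⟨_, _⟩⟩ h
    simp only [Finset.mem_sigma, mem_antidiagonal] at h
    obtain ⟨rfl, rfl⟩ := h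
    simp [add_assoc]

theorem sum_antidiagonal_antidiagonal_snd {M β : Type*} [AddCommMonoid M]
    [Finset.HasAntidiagonal M] [AddCommMonoid β] (m : M) (f : M → M → M → β) :
    ∑ p ∈ antidiagonal m, ∑ r ∈ antidiagonal p.2, f r.1 p.1 r.2 =
      ∑ p ∈ antidiagonal m, ∑ r ∈ antidiagonal p.2, f p.1 r.1 r.2 := by
  rw [Finset.sum_sigma', Finset.sum_sigma']
  refine Finset.sum_bij' (fun x _ => ⟨(x.2.1, x.1.1 + x.2.2), (x.1.1, x.2.2)⟩)
    (fun x _ => ⟨(x.2.1, x.1.1 + x.2.2), (x.1.1, x.2.2)⟩) ?_ ?_ ?_ ?_ ?_ <;>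
  · rintro ⟨⟨_, _⟩, ⟨_, _⟩⟩ h
    simp only [Finset.mem_sigma, mem_antidiagonal] at h
    obtain ⟨rfl, rfl⟩ := h
    simp [add_left_comm]

theorem sum_range_sum_antidiagonal_eq_sum_filter {β : Type*} [AddCommMonoid β] (M : ℕ)
    (f : ℕ × ℕ → β) :
    ∑ n ∈ range M, ∑ p ∈ antidiagonal n, f p =
      ∑ p ∈ range M ×ˢ range M with p.1 + p.2 < M, f p := by
  rw [← Finset.sum_fiberwise_of_maps_to (t := range M) (g := fun p : ℕ × ℕ => p.1 + p.2)
    (by simp)]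
  refine Finset.sum_congr rfl fun n hn => Finset.sum_congr ?_ fun _ _ => rfl
  ext p
  simp only [mem_antidiagonal, Finset.mem_filter, Finset.mem_product, Finset.mem_range] at hn ⊢
  lia

theorem sum_range_sum_antidiagonal_le (M : ℕ) {f : ℕ × ℕ → ℝ} (hf : ∀ p, 0 ≤ f p) :
    ∑ n ∈ range M, ∑ p ∈ antidiagonal n, f p ≤ ∑ i ∈ range M, ∑ j ∈ range M, f (i, j) := by
  rw [sum_range_sum_antidiagonal_eq_sum_filter, ← Finset.sum_product']
  exact Finset.sum_le_sum_of_subset_of_nonneg (Finset.filter_subset _ _) fun p _ _ => hf p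

theorem sum_range_sum_range_le (M : ℕ) {f : ℕ × ℕ → ℝ} (hf : ∀ p, 0 ≤ f p) :
    ∑ i ∈ range M, ∑ j ∈ range M, f (i, j) ≤
      ∑ n ∈ range (2 * M), ∑ p ∈ antidiagonal n, f p := by
  rw [sum_range_sum_antidiagonal_eq_sum_filter, ← Finset.sum_product']
  refine Finset.sum_le_sum_of_subset_of_nonneg (fun p hp => ?_) fun p _ _ => hf p
  simp only [Finset.mem_filter, Finset.mem_product, Finset.mem_range] at hp ⊢
  lia

theorem sum_range_sum_range_norm_add_sq {V : Type*} [NormedAddCommGroup V]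
    [InnerProductSpace ℝ V] (M : ℕ) (G : ℕ → V) :
    ∑ a ∈ range M, ∑ i ∈ range a, ‖G a + G i‖ ^ 2 =
      ((M : ℝ) - 2) * ∑ i ∈ range M, ‖G i‖ ^ 2 + ‖∑ i ∈ range M, G i‖ ^ 2 := by
  induction M with
  | zero => simp
  | succ M ih =>
    rw [Finset.sum_range_succ, ih, Finset.sum_range_succ _ M, Finset.sum_range_succ _ M,
      norm_add_sq_real]
    simp only [norm_add_sq_real, Finset.sum_add_distrib, ← Finset.mul_sum, ← inner_sum,
      Finset.sum_const, Finset.card_range, nsmul_eq_mul]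
    rw [real_inner_comm]
    push_cast
    ring

end Antidiagonal

section ConvolutionGronwall

open Finset (range)
open Finset.HasAntidiagonal (antidiagonal mem_antidiagonal)

theorem le_mul_exp_sub_of_deriv_le {X X' D D' : ℝ → ℝ} {a b : ℝ} (hab : a ≤ b)
    (hX : ∀ t, HasDerivAt X (X' t) t) (hD : ∀ t, HasDerivAt D (D' t) t)
    (h : ∀ t ∈ Set.Ioo a b, X' t ≤ D' t * X t) : X b ≤ X a * exp (D b - D a) := by
  have h_anti : AntitoneOn (fun t => X t * exp (-D t)) (Set.Icc a b) := by
    have h_deriv (t : ℝ) : HasDerivAt (fun t => X t * exp (-D t))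
        ((X' t - D' t * X t) * exp (-D t)) t := by
      refine ((hX t).mul (hD t).fun_neg.exp).congr_deriv ?_
      ring
    refine antitoneOn_of_hasDerivWithinAt_nonpos (convex_Icc a b)
      (fun t _ => (h_deriv t).continuousAt.continuousWithinAt)
      (fun t _ => (h_deriv t).hasDerivWithinAt) fun t ht => ?_
    rw [interior_Icc] at ht
    exact mul_nonpos_of_nonpos_of_nonneg (sub_nonpos.2 (h t ht)) (exp_pos _).le
  have h_ends := h_anti (Set.left_mem_Icc.2 hab) (Set.right_mem_Icc.2 hab) hab
  calc X b = X b * exp (-D b) * exp (D b) := by rw [mul_assoc, ← exp_add]; simp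
    _ ≤ X a * exp (-D a) * exp (D b) := by gcongr
    _ = X a * exp (D b - D a) := by rw [mul_assoc, ← exp_add]; ring_nf

theorem mul_sum_range_mul_pow_pred {R : Type*} [CommSemiring R] (M : ℕ) (c : ℕ → R) (t : R) :
    t * ∑ n ∈ range M, c n * (n * t ^ (n - 1)) = ∑ n ∈ range M, n * c n * t ^ n := by
  rw [Finset.mul_sum]
  refine Finset.sum_congr rfl fun n _ => ?_
  rcases n with _ | n
  · simp
  · rw [Nat.add_sub_cancel, pow_succ]
    ring

variable {x d : ℕ → ℝ}

theorem sum_range_convolution_mul_pow_le (hx : ∀ n, 0 ≤ x n) (hd : ∀ n, 0 ≤ d n)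
    (h : ∀ n : ℕ, n * x n ≤ ∑ p ∈ antidiagonal n, p.1 * d p.1 * x p.2) (M : ℕ) {t : ℝ}
    (ht : 0 ≤ t) :
    ∑ n ∈ range M, n * x n * t ^ n ≤
      (∑ k ∈ range M, k * d k * t ^ k) * ∑ l ∈ range M, x l * t ^ l :=
  calc ∑ n ∈ range M, n * x n * t ^ n
      ≤ ∑ n ∈ range M, (∑ p ∈ antidiagonal n, p.1 * d p.1 * x p.2) * t ^ n := by
        gcongr with n
        exact h n
    _ = ∑ n ∈ range M, ∑ p ∈ antidiagonal n, p.1 * d p.1 * t ^ p.1 * (x p.2 * t ^ p.2) := by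
        refine Finset.sum_congr rfl fun n _ => ?_
        rw [Finset.sum_mul]
        refine Finset.sum_congr rfl fun p hp => ?_
        rw [← mem_antidiagonal.1 hp, pow_add]
        ring
    _ ≤ ∑ k ∈ range M, ∑ l ∈ range M, k * d k * t ^ k * (x l * t ^ l) :=
        sum_range_sum_antidiagonal_le M
          (f := fun p => p.1 * d p.1 * t ^ p.1 * (x p.2 * t ^ p.2)) fun p => by
            have := hd p.1
            have := hx p.2
            positivity
    _ = (∑ k ∈ range M, k * d k * t ^ k) * ∑ l ∈ range M, x l * t ^ l :=
        (Finset.sum_mul_sum _ _ _ _).symm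

/-- Grönwall for the generating polynomials `X` of `x` and `D` of `d`: `h` gives
`t X'(t) ≤ t D'(t) X(t)` for `t ∈ [0, 1]`. -/
theorem sum_range_le_mul_exp_of_convolution_le (hx : ∀ n, 0 ≤ x n) (hd : ∀ n, 0 ≤ d n)
    (h : ∀ n : ℕ, n * x n ≤ ∑ p ∈ antidiagonal n, p.1 * d p.1 * x p.2) (M : ℕ) :
    ∑ n ∈ range (M + 1), x n ≤ x 0 * exp (∑ k ∈ range (M + 1), d k) := by
  have h_deriv (c : ℕ → ℝ) (t : ℝ) : HasDerivAt (fun t => ∑ n ∈ range (M + 1), c n * t ^ n)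
      (∑ n ∈ range (M + 1), c n * (n * t ^ (n - 1))) t :=
    HasDerivAt.fun_sum fun n _ => (hasDerivAt_pow n t).const_mul (c n)
  have h_le (t : ℝ) (ht : t ∈ Set.Ioo (0 : ℝ) 1) :
      ∑ n ∈ range (M + 1), x n * (n * t ^ (n - 1)) ≤
        (∑ n ∈ range (M + 1), d n * (n * t ^ (n - 1))) * ∑ n ∈ range (M + 1), x n * t ^ n := by
    refine le_of_mul_le_mul_left ?_ ht.1
    rw [← mul_assoc, mul_sum_range_mul_pow_pred, mul_sum_range_mul_pow_pred]
    exact sum_range_convolution_mul_pow_le hx hd h (M + 1) ht.1.le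
  calc ∑ n ∈ range (M + 1), x n
      ≤ x 0 * exp ((∑ k ∈ range (M + 1), d k) - d 0) := by
        simpa [Finset.sum_range_succ'] using
          le_mul_exp_sub_of_deriv_le zero_le_one (h_deriv x) (h_deriv d) h_le
    _ ≤ x 0 * exp (∑ k ∈ range (M + 1), d k) := by
        gcongr
        · exact hx 0
        · linarith [hd 0]

end ConvolutionGronwall

section GramDeterminant

open Finset (range)
open Finset.HasAntidiagonal (antidiagonal mem_antidiagonal)

/-- The square sum of the `m`-th antidiagonal of an infinite matrix. Applied to the `2 × 2` minors
of two coefficient sequences, it grades their Gram determinant by total degree. -/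
def antidiagNormSq (F : ℕ → ℕ → ℂ) (m : ℕ) : ℝ := ∑ p ∈ antidiagonal m, ‖F p.1 p.2‖ ^ 2

theorem antidiagNormSq_nonneg (F : ℕ → ℕ → ℂ) (m : ℕ) : 0 ≤ antidiagNormSq F m :=
  Finset.sum_nonneg fun _ _ => by positivity

variable {F : ℕ → ℕ → ℂ}

theorem sum_antidiagonal_eq_zero_of_antisymm (hF : ∀ i j, F j i = -F i j) (m : ℕ) :
    ∑ p ∈ antidiagonal m, F p.1 p.2 = 0 := by
  refine self_eq_neg.1 ?_
  rw [← Finset.sum_neg_distrib, ← Finset.Nat.sum_antidiagonal_swap]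
  exact Finset.sum_congr rfl fun p _ => hF p.1 p.2

theorem sum_antidiagonal_shift_eq_sum_range {β : Type*} [AddCommMonoid β] (f : ℕ → ℕ → β)
    (m : ℕ) :
    ∑ p ∈ antidiagonal m, ∑ r ∈ antidiagonal p.2, (if p.1 = 0 then 0 else f (p.1 + r.1) r.1) =
      ∑ a ∈ range (m + 1), ∑ i ∈ range a, f a i := by
  rw [← sum_antidiagonal_antidiagonal_fst m fun k i _ => if k = 0 then 0 else f (k + i) i,
    Finset.Nat.sum_antidiagonal_eq_sum_range_succ_mk]
  refine Finset.sum_congr rfl fun a _ => ?_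
  rw [← Finset.Nat.sum_antidiagonal_swap, Finset.Nat.sum_antidiagonal_eq_sum_range_succ_mk,
    Finset.sum_range_succ]
  simp only [Prod.fst_swap, Prod.snd_swap, tsub_self, if_true, add_zero]
  refine Finset.sum_congr rfl fun i hi => ?_
  have hia : i < a := Finset.mem_range.1 hi
  rw [if_neg (by lia), Nat.sub_add_cancel hia.le]

theorem sum_antidiagonal_norm_shift_add_sq (hF : ∀ i j, F j i = -F i j) (m : ℕ) :
    ∑ p ∈ antidiagonal m, ∑ r ∈ antidiagonal p.2,
        (if p.1 = 0 then 0 else ‖F (p.1 + r.1) r.2 + F r.1 (p.1 + r.2)‖ ^ 2) =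
      ((m : ℝ) - 1) * antidiagNormSq F m := by
  set G : ℕ → ℂ := fun i => F i (m - i) with hG
  have h_sum : ∑ i ∈ range (m + 1), G i = 0 := by
    rw [← sum_antidiagonal_eq_zero_of_antisymm hF m,
      Finset.Nat.sum_antidiagonal_eq_sum_range_succ F]
  have h_sq : ∑ i ∈ range (m + 1), ‖G i‖ ^ 2 = antidiagNormSq F m :=
    (Finset.Nat.sum_antidiagonal_eq_sum_range_succ (fun i j => ‖F i j‖ ^ 2) m).symm
  calc _ = ∑ p ∈ antidiagonal m, ∑ r ∈ antidiagonal p.2,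
          (if p.1 = 0 then 0 else ‖G (p.1 + r.1) + G r.1‖ ^ 2) := by
        refine Finset.sum_congr rfl fun p hp => Finset.sum_congr rfl fun r hr => ?_
        rw [mem_antidiagonal] at hp hr
        simp only [hG, ← hp, ← hr, ← add_assoc, Nat.add_sub_cancel_left,
          show p.1 + r.1 + r.2 - r.1 = p.1 + r.2 by lia]
    _ = ∑ a ∈ range (m + 1), ∑ i ∈ range a, ‖G a + G i‖ ^ 2 :=
        sum_antidiagonal_shift_eq_sum_range (fun a i => ‖G a + G i‖ ^ 2) m
    _ = ((m : ℝ) - 1) * antidiagNormSq F m := by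
        rw [sum_range_sum_range_norm_add_sq, h_sum, h_sq, norm_zero]
        push_cast
        ring

theorem sum_antidiagonal_convolution_mul {R : Type*} [CommSemiring R] (q : ℕ → R)
    (F f : ℕ → ℕ → R) (m : ℕ) :
    ∑ p ∈ antidiagonal m, (∑ r ∈ antidiagonal p.1, q r.1 * F r.2 p.2 +
        ∑ r ∈ antidiagonal p.2, q r.1 * F p.1 r.2) * f p.1 p.2 =
      ∑ p ∈ antidiagonal m, ∑ r ∈ antidiagonal p.2,
        q p.1 * F r.1 r.2 * (f (p.1 + r.1) r.2 + f r.1 (p.1 + r.2)) := by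
  have h_fst : ∑ p ∈ antidiagonal m, ∑ r ∈ antidiagonal p.1, q r.1 * F r.2 p.2 * f p.1 p.2 =
      ∑ p ∈ antidiagonal m, ∑ r ∈ antidiagonal p.2, q p.1 * F r.1 r.2 * f (p.1 + r.1) r.2 := by
    rw [← sum_antidiagonal_antidiagonal_fst m fun k i j => q k * F i j * f (k + i) j]
    refine Finset.sum_congr rfl fun p _ => Finset.sum_congr rfl fun r hr => ?_
    rw [mem_antidiagonal.1 hr]
  have h_snd : ∑ p ∈ antidiagonal m, ∑ r ∈ antidiagonal p.2, q r.1 * F p.1 r.2 * f p.1 p.2 =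
      ∑ p ∈ antidiagonal m, ∑ r ∈ antidiagonal p.2, q p.1 * F r.1 r.2 * f r.1 (p.1 + r.2) := by
    rw [← sum_antidiagonal_antidiagonal_snd m fun k i j => q k * F i j * f i (k + j)]
    refine Finset.sum_congr rfl fun p _ => Finset.sum_congr rfl fun r hr => ?_
    rw [mem_antidiagonal.1 hr]
  simp only [add_mul, mul_add, Finset.sum_add_distrib, Finset.sum_mul, h_fst, h_snd]

variable {q : ℕ → ℂ}

theorem sub_one_mul_antidiagNormSq_eq
    (h_rec : ∀ i j : ℕ, ((i + j : ℕ) - 1 : ℂ) * F i j =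
      ∑ r ∈ antidiagonal i, q r.1 * F r.2 j + ∑ r ∈ antidiagonal j, q r.1 * F i r.2) (m : ℕ) :
    ((m : ℝ) - 1) * antidiagNormSq F m =
      ∑ p ∈ antidiagonal m, ∑ r ∈ antidiagonal p.2, (q p.1 * F r.1 r.2 *
        conj (F (p.1 + r.1) r.2 + F r.1 (p.1 + r.2))).re := by
  simp only [← Complex.re_sum, map_add]
  rw [← sum_antidiagonal_convolution_mul q F fun i j => conj (F i j), Complex.re_sum,
    antidiagNormSq, Finset.mul_sum]
  refine Finset.sum_congr rfl fun p hp => ?_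
  rw [← h_rec, mem_antidiagonal.1 hp, mul_assoc, Complex.mul_conj, Complex.normSq_eq_norm_sq]
  norm_cast

theorem re_mul_conj_le (z w : ℂ) : (z * conj w).re ≤ (‖z‖ ^ 2 + ‖w‖ ^ 2) / 2 := by
  have h := Complex.re_le_norm (z * conj w)
  rw [norm_mul, RCLike.norm_conj] at h
  linarith [two_mul_le_add_sq ‖z‖ ‖w‖]

/-- After AM-GM, antisymmetry turns the squares of the shifted sums into exactly half of the left
side, which is why no constant is lost. -/
theorem sub_one_mul_antidiagNormSq_le (hF : ∀ i j, F j i = -F i j) (hq : q 0 = 0)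
    (h_rec : ∀ i j : ℕ, ((i + j : ℕ) - 1 : ℂ) * F i j =
      ∑ r ∈ antidiagonal i, q r.1 * F r.2 j + ∑ r ∈ antidiagonal j, q r.1 * F i r.2) (m : ℕ) :
    ((m : ℝ) - 1) * antidiagNormSq F m ≤
      ∑ p ∈ antidiagonal m, ‖q p.1‖ ^ 2 * antidiagNormSq F p.2 := by
  have h_amgm (k i j : ℕ) : (q k * F i j * conj (F (k + i) j + F i (k + j))).re ≤
      (‖q k‖ ^ 2 * ‖F i j‖ ^ 2 + if k = 0 then 0 else ‖F (k + i) j + F i (k + j)‖ ^ 2) / 2 := by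
    rcases eq_or_ne k 0 with rfl | hk
    · simp [hq]
    · rw [if_neg hk, ← mul_pow, ← norm_mul]
      exact re_mul_conj_le _ _
  have h_le : ((m : ℝ) - 1) * antidiagNormSq F m ≤
      (∑ p ∈ antidiagonal m, ‖q p.1‖ ^ 2 * antidiagNormSq F p.2 +
        ((m : ℝ) - 1) * antidiagNormSq F m) / 2 :=
    calc ((m : ℝ) - 1) * antidiagNormSq F m
        ≤ ∑ p ∈ antidiagonal m, ∑ r ∈ antidiagonal p.2,
            (‖q p.1‖ ^ 2 * ‖F r.1 r.2‖ ^ 2 +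
              if p.1 = 0 then 0 else ‖F (p.1 + r.1) r.2 + F r.1 (p.1 + r.2)‖ ^ 2) / 2 := by
          rw [sub_one_mul_antidiagNormSq_eq h_rec]
          gcongr with p _ r _
          exact h_amgm p.1 r.1 r.2
      _ = _ := by
          rw [← sum_antidiagonal_norm_shift_add_sq hF]
          simp only [← Finset.sum_div, Finset.sum_add_distrib, ← Finset.mul_sum, antidiagNormSq]
  linarith

theorem sum_range_antidiagNormSq_le {a : ℕ → ℂ} (hF : ∀ i j, F j i = -F i j)
    (h_rec : ∀ i j : ℕ, ((i + j : ℕ) - 1 : ℂ) * F i j =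
      ∑ r ∈ antidiagonal i, r.1 * a r.1 * F r.2 j + ∑ r ∈ antidiagonal j, r.1 * a r.1 * F i r.2)
    (M : ℕ) :
    ∑ m ∈ range M, antidiagNormSq F m ≤
      antidiagNormSq F 1 * exp (∑ k ∈ range M, k * ‖a k‖ ^ 2) := by
  have h_zero : antidiagNormSq F 0 = 0 := by
    simpa [antidiagNormSq] using self_eq_neg.1 (hF 0 0)
  have h_conv (n : ℕ) : n * antidiagNormSq F (n + 1) ≤
      ∑ p ∈ antidiagonal n, p.1 * (p.1 * ‖a p.1‖ ^ 2) * antidiagNormSq F (p.2 + 1) := by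
    have h := sub_one_mul_antidiagNormSq_le (q := fun k => k * a k) hF (by simp) h_rec (n + 1)
    rw [Finset.Nat.sum_antidiagonal_succ', h_zero, mul_zero, zero_add, Nat.cast_succ,
      add_sub_cancel_right] at h
    refine h.trans_eq (Finset.sum_congr rfl fun p _ => ?_)
    rw [norm_mul, Complex.norm_natCast]
    ring
  have h_exp := sum_range_le_mul_exp_of_convolution_le (d := fun k => k * ‖a k‖ ^ 2)
    (fun n => antidiagNormSq_nonneg F (n + 1)) (fun k => by positivity) h_conv
  rcases M with _ | _ | M
  · simpa using antidiagNormSq_nonneg F 1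
  · simpa [h_zero] using antidiagNormSq_nonneg F 1
  · rw [Finset.sum_range_succ', h_zero, add_zero]
    refine (h_exp M).trans ?_
    gcongr
    · exact antidiagNormSq_nonneg F 1
    · simp

theorem sum_sum_norm_mul_sub_mul_sq {ι : Type*} (s : Finset ι) (A B : ι → ℂ) :
    ∑ i ∈ s, ∑ j ∈ s, ‖A i * B j - B i * A j‖ ^ 2 =
      2 * ((∑ i ∈ s, ‖A i‖ ^ 2) * (∑ i ∈ s, ‖B i‖ ^ 2) -
        ‖∑ i ∈ s, A i * conj (B i)‖ ^ 2) := by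
  have h_term (i j : ι) : ‖A i * B j - B i * A j‖ ^ 2 =
      ‖A i‖ ^ 2 * ‖B j‖ ^ 2 + ‖B i‖ ^ 2 * ‖A j‖ ^ 2 -
        2 * (A i * conj (B i) * conj (A j * conj (B j))).re := by
    simp only [← Complex.normSq_eq_norm_sq, Complex.normSq_sub, map_mul, Complex.conj_conj]
    ring_nf
  have h_cross : ∑ i ∈ s, ∑ j ∈ s,
      (A i * conj (B i) * conj (A j * conj (B j))).re =
        ‖∑ i ∈ s, A i * conj (B i)‖ ^ 2 := by
    rw [← Complex.normSq_eq_norm_sq, ← Complex.ofReal_re (Complex.normSq _), ← Complex.mul_conj,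
      map_sum, Finset.sum_mul_sum]
    simp only [Complex.re_sum]
  simp only [h_term, Finset.sum_sub_distrib, Finset.sum_add_distrib, ← Finset.mul_sum, h_cross,
    ← Finset.sum_mul]
  ring

theorem gram_det_range_le {a A B : ℕ → ℂ} (hA0 : A 0 = 0)
    (hB : ∀ n : ℕ, n * B n = ∑ r ∈ antidiagonal n, r.1 * a r.1 * B r.2)
    (hA : ∀ n : ℕ, n * A n = A n + ∑ r ∈ antidiagonal n, r.1 * a r.1 * A r.2) (M : ℕ) :
    (∑ i ∈ range M, ‖A i‖ ^ 2) * (∑ i ∈ range M, ‖B i‖ ^ 2) -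
        ‖∑ i ∈ range M, A i * conj (B i)‖ ^ 2 ≤
      ‖A 1‖ ^ 2 * ‖B 0‖ ^ 2 * exp (∑ k ∈ range (2 * M), k * ‖a k‖ ^ 2) := by
  set F : ℕ → ℕ → ℂ := fun i j => A i * B j - B i * A j with hF
  have h_rec (i j : ℕ) : ((i + j : ℕ) - 1 : ℂ) * F i j =
      ∑ r ∈ antidiagonal i, r.1 * a r.1 * F r.2 j +
        ∑ r ∈ antidiagonal j, r.1 * a r.1 * F i r.2 := by
    simp only [hF, mul_sub, Finset.sum_sub_distrib, ← mul_assoc, ← Finset.sum_mul,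
      mul_right_comm _ (A i), mul_right_comm _ (B i), ← hB, ← sub_eq_iff_eq_add'.2 (hA _)]
    push_cast
    ring
  have h_one : antidiagNormSq F 1 = 2 * (‖A 1‖ ^ 2 * ‖B 0‖ ^ 2) := by
    rw [antidiagNormSq, Finset.Nat.sum_antidiagonal_succ, Finset.Nat.antidiagonal_zero,
      Finset.sum_singleton]
    simp only [hF, hA0, zero_mul, mul_zero, zero_sub, sub_zero, norm_neg, norm_mul, zero_add]
    ring
  have h_le := (sum_range_sum_range_le M (f := fun p => ‖F p.1 p.2‖ ^ 2)
    fun p => by positivity).trans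
      (sum_range_antidiagNormSq_le (F := F) (fun i j => by simp only [hF]; ring) h_rec (2 * M))
  rw [sum_sum_norm_mul_sub_mul_sq, h_one] at h_le
  linarith

end GramDeterminant

section TaylorCoeff

open Finset (range)
open Finset.HasAntidiagonal (antidiagonal mem_antidiagonal)

/-- The `n`-th Taylor coefficient of `f` at the origin, meant for entire `f`: it is a
junk value where `f` is not smooth. -/
def taylorCoeff (f : ℂ → ℂ) (n : ℕ) : ℂ := iteratedDeriv n f 0 / n.factorial

variable {f g : ℂ → ℂ}

theorem taylorCoeff_zero (f : ℂ → ℂ) : taylorCoeff f 0 = f 0 := by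
  simp [taylorCoeff]

theorem hasSum_taylorCoeff (hf : Differentiable ℂ f) (z : ℂ) :
    HasSum (fun n => taylorCoeff f n * z ^ n) (f z) := by
  refine (Complex.hasSum_taylorSeries_of_entire hf 0 z).congr_fun fun n => ?_
  simp only [taylorCoeff, sub_zero, smul_eq_mul]
  ring

theorem summable_norm_taylorCoeff (hf : Differentiable ℂ f) :
    Summable fun n => ‖taylorCoeff f n‖ := by
  simpa using (hasSum_taylorCoeff hf 1).summable.norm

theorem taylorCoeff_add (hf : Differentiable ℂ f) (hg : Differentiable ℂ g) (n : ℕ) :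
    taylorCoeff (fun z => f z + g z) n = taylorCoeff f n + taylorCoeff g n := by
  rw [taylorCoeff, iteratedDeriv_fun_add hf.contDiff.contDiffAt hg.contDiff.contDiffAt, add_div,
    taylorCoeff, taylorCoeff]

theorem taylorCoeff_mul (hf : Differentiable ℂ f) (hg : Differentiable ℂ g) (n : ℕ) :
    taylorCoeff (fun z => f z * g z) n =
      ∑ p ∈ antidiagonal n, taylorCoeff f p.1 * taylorCoeff g p.2 := by
  rw [taylorCoeff, iteratedDeriv_fun_mul hf.contDiff.contDiffAt hg.contDiff.contDiffAt,
    Finset.sum_div, Finset.Nat.sum_antidiagonal_eq_sum_range_succ_mk]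
  refine Finset.sum_congr rfl fun k hk => ?_
  rw [Nat.cast_choose ℂ (Finset.mem_range_succ_iff.1 hk), taylorCoeff, taylorCoeff]
  have := n.factorial_ne_zero
  field_simp

theorem taylorCoeff_sum_range (c : ℕ → ℂ) (N n : ℕ) :
    taylorCoeff (fun z => ∑ k ∈ range N, c k * z ^ k) n = if n < N then c n else 0 := by
  have h_term (k : ℕ) : iteratedDeriv n (fun z : ℂ => c k * z ^ k) 0 =
      if n = k then c k * n.factorial else 0 := by
    rw [iteratedDeriv_const_mul_field, iteratedDeriv_fun_pow_zero]
    split_ifs with h <;> simp [h]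
  rw [taylorCoeff, iteratedDeriv_fun_sum fun k _ => by fun_prop]
  simp only [h_term, Finset.sum_ite_eq, Finset.mem_range]
  split_ifs <;> simp [n.factorial_ne_zero]

theorem taylorCoeff_id (n : ℕ) : taylorCoeff (fun z => z) n = if n = 1 then 1 else 0 := by
  rw [taylorCoeff, iteratedDeriv_fun_id_zero]
  split_ifs with h <;> simp [h]

theorem taylorCoeff_id_mul_zero (f : ℂ → ℂ) : taylorCoeff (fun z => z * f z) 0 = 0 := by
  simp [taylorCoeff_zero]

theorem taylorCoeff_id_mul_succ (hf : Differentiable ℂ f) (n : ℕ) :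
    taylorCoeff (fun z => z * f z) (n + 1) = taylorCoeff f n := by
  rw [taylorCoeff_mul differentiable_fun_id hf, Finset.sum_eq_single (1, n)]
  · simp [taylorCoeff_id]
  · intro p hp hne
    have : p.1 ≠ 1 := fun h => hne (Prod.ext h (by have := mem_antidiagonal.1 hp; lia))
    simp [taylorCoeff_id, this]
  · simp [add_comm]

theorem taylorCoeff_id_mul_deriv (hf : Differentiable ℂ f) (n : ℕ) :
    taylorCoeff (fun z => z * deriv f z) n = n * taylorCoeff f n := by
  rcases n with _ | n
  · simp [taylorCoeff_id_mul_zero]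
  · rw [taylorCoeff_id_mul_succ hf.deriv, taylorCoeff, taylorCoeff, ← iteratedDeriv_succ',
      Nat.factorial_succ]
    have := n.factorial_ne_zero
    push_cast
    field_simp

theorem natCast_mul_taylorCoeff_exp (hf : Differentiable ℂ f) (n : ℕ) :
    n * taylorCoeff (fun z => Complex.exp (f z)) n =
      ∑ p ∈ antidiagonal n,
        p.1 * taylorCoeff f p.1 * taylorCoeff (fun z => Complex.exp (f z)) p.2 := by
  have h_deriv : (fun z => z * deriv (fun z => Complex.exp (f z)) z) =
      fun z => z * deriv f z * Complex.exp (f z) := by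
    ext z
    rw [deriv_cexp hf.differentiableAt]
    ring
  rw [← taylorCoeff_id_mul_deriv hf.cexp, h_deriv,
    taylorCoeff_mul (differentiable_fun_id.fun_mul hf.deriv) hf.cexp]
  simp only [taylorCoeff_id_mul_deriv hf]

theorem natCast_mul_taylorCoeff_id_mul_exp (hf : Differentiable ℂ f) (n : ℕ) :
    n * taylorCoeff (fun z => z * Complex.exp (f z)) n =
      taylorCoeff (fun z => z * Complex.exp (f z)) n + ∑ p ∈ antidiagonal n,
        p.1 * taylorCoeff f p.1 * taylorCoeff (fun z => z * Complex.exp (f z)) p.2 := by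
  have hg : Differentiable ℂ fun z => z * Complex.exp (f z) := differentiable_fun_id.fun_mul hf.cexp
  have h_deriv : (fun z => z * deriv (fun z => z * Complex.exp (f z)) z) =
      fun z => z * Complex.exp (f z) + z * deriv f z * (z * Complex.exp (f z)) := by
    ext z
    rw [deriv_fun_mul differentiableAt_fun_id hf.cexp.differentiableAt,
      deriv_cexp hf.differentiableAt, deriv_id'']
    ring
  rw [← taylorCoeff_id_mul_deriv hg, h_deriv,
    taylorCoeff_add hg ((differentiable_fun_id.fun_mul hf.deriv).fun_mul hg),
    taylorCoeff_mul (differentiable_fun_id.fun_mul hf.deriv) hg]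
  simp only [taylorCoeff_id_mul_deriv hf]

end TaylorCoeff

section CircleParseval

@[fun_prop]
theorem continuous_bpt : Continuous bpt := by
  unfold bpt
  fun_prop

theorem norm_bpt (θ : ℝ) : ‖bpt θ‖ = 1 := Complex.norm_exp_ofReal_mul_I θ

theorem bpt_mul_conj_bpt (θ : ℝ) : bpt θ * conj (bpt θ) = 1 := by
  simp [Complex.mul_conj, Complex.normSq_eq_norm_sq, norm_bpt]

theorem integral_bpt_pow_mul_conj_bpt_pow (n m : ℕ) :
    ∫ θ in (0 : ℝ)..2 * π, bpt θ ^ n * conj (bpt θ ^ m) =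
      if n = m then 2 * (π : ℂ) else 0 := by
  have h_exp (θ : ℝ) : bpt θ ^ n * conj (bpt θ ^ m) =
      Complex.exp (((n : ℂ) - m) * Complex.I * θ) := by
    rw [bpt, map_pow, ← Complex.exp_conj, ← Complex.exp_nat_mul, ← Complex.exp_nat_mul,
      ← Complex.exp_add, map_mul, Complex.conj_I, Complex.conj_ofReal]
    ring_nf
  simp only [h_exp]
  split_ifs with h
  · simp [h]
  · have h_ne : ((n : ℂ) - m) * Complex.I ≠ 0 :=
      mul_ne_zero (sub_ne_zero.2 (mod_cast h)) Complex.I_ne_zero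
    have h_period : Complex.exp (((n : ℂ) - m) * Complex.I * ((2 * π : ℝ) : ℂ)) = 1 :=
      Complex.exp_eq_one_iff.2 ⟨(n : ℤ) - m, by push_cast; ring⟩
    rw [integral_exp_mul_complex h_ne, h_period]
    simp

variable {g h : ℂ → ℂ}

theorem hasSum_taylorCoeff_mul_integral (hg : Differentiable ℂ g) {ψ : ℝ → ℂ}
    (hψ : Continuous ψ) :
    HasSum (fun n => taylorCoeff g n * ∫ θ in (0 : ℝ)..2 * π, bpt θ ^ n * ψ θ)
      (∫ θ in (0 : ℝ)..2 * π, g (bpt θ) * ψ θ) := by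
  simp only [← intervalIntegral.integral_const_mul]
  refine intervalIntegral.hasSum_integral_of_dominated_convergence
    (F := fun n θ => taylorCoeff g n * (bpt θ ^ n * ψ θ)) (f := fun θ => g (bpt θ) * ψ θ)
    (fun n θ => ‖taylorCoeff g n‖ * ‖ψ θ‖)
    (fun n => (by fun_prop : Continuous _).aestronglyMeasurable)
    (fun n => .of_forall fun θ _ => by simp [norm_bpt])
    (.of_forall fun θ _ => (summable_norm_taylorCoeff hg).mul_right _) ?_
    (.of_forall fun θ _ => by
      simpa only [mul_assoc] using (hasSum_taylorCoeff hg (bpt θ)).mul_right (ψ θ))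
  simp only [tsum_mul_right]
  exact (by fun_prop : Continuous _).intervalIntegrable _ _

theorem integral_mul_conj_bpt_pow (hg : Differentiable ℂ g) (n : ℕ) :
    ∫ θ in (0 : ℝ)..2 * π, g (bpt θ) * conj (bpt θ ^ n) = 2 * π * taylorCoeff g n := by
  have h_sum := hasSum_taylorCoeff_mul_integral hg
    (ψ := fun θ => conj (bpt θ ^ n)) (by fun_prop)
  simp only [integral_bpt_pow_mul_conj_bpt_pow] at h_sum
  rw [h_sum.unique (hasSum_single n fun m hm => by rw [if_neg hm, mul_zero]), if_pos rfl,
    mul_comm]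

theorem integral_bpt_pow_mul_conj (hg : Differentiable ℂ g) (n : ℕ) :
    ∫ θ in (0 : ℝ)..2 * π, bpt θ ^ n * conj (g (bpt θ)) =
      2 * π * conj (taylorCoeff g n) := by
  have h_conj := congrArg conj (integral_mul_conj_bpt_pow hg n)
  rw [← intervalIntegral.intervalIntegral_conj] at h_conj
  simpa only [map_mul, map_ofNat, Complex.conj_ofReal, Complex.conj_conj, mul_comm] using h_conj

theorem hasSum_taylorCoeff_mul_conj (hg : Differentiable ℂ g) (hh : Differentiable ℂ h) :
    HasSum (fun n => 2 * π * (taylorCoeff g n * conj (taylorCoeff h n)))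
      (∫ θ in (0 : ℝ)..2 * π, g (bpt θ) * conj (h (bpt θ))) := by
  have hhc := hh.continuous
  refine (hasSum_taylorCoeff_mul_integral hg
    (ψ := fun θ => conj (h (bpt θ))) (by fun_prop)).congr_fun fun n => ?_
  rw [integral_bpt_pow_mul_conj hh]
  ring

theorem hasSum_norm_taylorCoeff_sq (hg : Differentiable ℂ g) :
    HasSum (fun n => 2 * π * ‖taylorCoeff g n‖ ^ 2)
      (∫ θ in (0 : ℝ)..2 * π, ‖g (bpt θ)‖ ^ 2) := by
  have h_sum := hasSum_taylorCoeff_mul_conj hg hg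
  simp only [Complex.mul_conj, Complex.normSq_eq_norm_sq, intervalIntegral.integral_ofReal]
    at h_sum
  exact_mod_cast h_sum

end CircleParseval

section EntireExponential

open Finset (range)

variable {f : ℂ → ℂ}

theorem norm_cexp_sq (z : ℂ) : ‖Complex.exp z‖ ^ 2 = exp (2 * z.re) := by
  rw [Complex.norm_exp, ← exp_nat_mul, Nat.cast_ofNat]

theorem gram_det_taylorCoeff_exp_le (hf : Differentiable ℂ f) (M : ℕ) :
    (∑ n ∈ range M, ‖taylorCoeff (fun z => z * Complex.exp (f z)) n‖ ^ 2) *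
          (∑ n ∈ range M, ‖taylorCoeff (fun z => Complex.exp (f z)) n‖ ^ 2) -
        ‖∑ n ∈ range M, taylorCoeff (fun z => z * Complex.exp (f z)) n *
          conj (taylorCoeff (fun z => Complex.exp (f z)) n)‖ ^ 2 ≤
      exp (4 * (f 0).re + ∑ k ∈ range (2 * M), k * ‖taylorCoeff f k‖ ^ 2) := by
  refine (gram_det_range_le (taylorCoeff_id_mul_zero fun z => Complex.exp (f z))
    (natCast_mul_taylorCoeff_exp hf) (natCast_mul_taylorCoeff_id_mul_exp hf) M).trans_eq ?_
  rw [taylorCoeff_id_mul_succ hf.cexp, taylorCoeff_zero, norm_cexp_sq, ← exp_add, ← exp_add]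
  ring_nf

theorem integral_exp_re_sq_sub_le (hf : Differentiable ℂ f) {S : ℝ}
    (hS : ∀ M, ∑ k ∈ range M, k * ‖taylorCoeff f k‖ ^ 2 ≤ S) :
    (∫ θ in (0 : ℝ)..2 * π, exp (2 * (f (bpt θ)).re)) ^ 2 -
        ‖∫ θ in (0 : ℝ)..2 * π, (exp (2 * (f (bpt θ)).re) : ℂ) * bpt θ‖ ^ 2 ≤
      4 * π ^ 2 * exp (4 * (f 0).re + S) := by
  set g : ℂ → ℂ := fun z => Complex.exp (f z)
  have hg : Differentiable ℂ g := hf.cexp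
  have hzg : Differentiable ℂ fun z => z * g z := differentiable_fun_id.fun_mul hg
  have h_norm (z : ℂ) : ‖g z‖ ^ 2 = exp (2 * (f z).re) := norm_cexp_sq (f z)
  have h_cross (θ : ℝ) : bpt θ * g (bpt θ) * conj (g (bpt θ)) =
      (exp (2 * (f (bpt θ)).re) : ℂ) * bpt θ := by
    rw [mul_assoc, Complex.mul_conj, Complex.normSq_eq_norm_sq, h_norm, mul_comm]
  have hB := (hasSum_norm_taylorCoeff_sq hg).tendsto_sum_nat
  have hA := (hasSum_norm_taylorCoeff_sq hzg).tendsto_sum_nat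
  have hAB := (hasSum_taylorCoeff_mul_conj hzg hg).tendsto_sum_nat
  simp only [norm_mul, norm_bpt, one_mul, h_norm] at hA hB
  simp only [h_cross] at hAB
  have h_two_pi : ‖(2 * π : ℂ)‖ = 2 * π := by
    simp [abs_of_pos pi_pos]
  rw [sq (intervalIntegral _ _ _ _)]
  refine le_of_tendsto' ((hA.mul hB).sub (hAB.norm.pow 2)) fun M => ?_
  simp only [← Finset.mul_sum, norm_mul, h_two_pi]
  calc _ = 4 * π ^ 2 * ((∑ n ∈ range M, ‖taylorCoeff (fun z => z * g z) n‖ ^ 2) *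
          (∑ n ∈ range M, ‖taylorCoeff g n‖ ^ 2) - ‖∑ n ∈ range M,
            taylorCoeff (fun z => z * g z) n * conj (taylorCoeff g n)‖ ^ 2) := by ring
    _ ≤ 4 * π ^ 2 * exp (4 * (f 0).re + ∑ k ∈ range (2 * M), k * ‖taylorCoeff f k‖ ^ 2) := by
        gcongr
        exact gram_det_taylorCoeff_exp_le hf M
    _ ≤ 4 * π ^ 2 * exp (4 * (f 0).re + S) := by
        gcongr
        exact hS _

end EntireExponential

section Stokes

open Complex (I ofRealCLM)
theorem integrableOn_unitDisk {E : Type*} [NormedAddCommGroup E] {F : ℂ → E} (hF : Continuous F) :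
    IntegrableOn F unitDisk :=
  (hF.continuousOn.integrableOn_compact (isCompact_closedBall (0 : ℂ) 1)).mono_set
    Metric.ball_subset_closedBall

theorem bpt_eq_cos_add_sin_mul_I (θ : ℝ) : bpt θ = Real.cos θ + Real.sin θ * I := by
  rw [bpt, Complex.exp_mul_I, Complex.ofReal_cos, Complex.ofReal_sin]

theorem periodic_bpt : Function.Periodic bpt (2 * π) := fun θ => by
  simp only [bpt_eq_cos_add_sin_mul_I, Real.cos_add_two_pi, Real.sin_add_two_pi]

theorem contDiff_bpt {n : ℕ∞} : ContDiff ℝ n bpt :=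
  Complex.contDiff_exp.comp (ofRealCLM.contDiff.mul contDiff_const)

theorem hasDerivAt_bpt (θ : ℝ) : HasDerivAt bpt (bpt θ * I) θ := by
  have h := ((ofRealCLM.hasDerivAt (x := θ)).mul_const I).cexp
  rwa [Complex.ofRealCLM_apply, Complex.ofRealCLM_apply, Complex.ofReal_one, one_mul] at h

theorem setIntegral_unitDisk_eq_setIntegral_polar {E : Type*} [NormedAddCommGroup E]
    [NormedSpace ℝ E] (F : ℂ → E) :
    ∫ x in unitDisk, F x =
      ∫ p in Set.Ioo (0 : ℝ) 1 ×ˢ Set.Ioo (-π) π, p.1 • F (p.1 * bpt p.2) := by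
  have h_mem (p : ℝ × ℝ) : Complex.polarCoord.symm p ∈ unitDisk ↔ |p.1| < 1 := by
    rw [unitDisk, mem_ball_zero_iff, Complex.norm_polarCoord_symm]
  have h_subset : Set.Ioo (0 : ℝ) 1 ×ˢ Set.Ioo (-π) π ⊆ polarCoord.target := by
    rw [polarCoord_target]
    exact Set.prod_mono_left Set.Ioo_subset_Ioi_self
  have h_disk : MeasurableSet unitDisk := measurableSet_ball
  rw [← integral_indicator h_disk, ← Complex.integral_comp_polarCoord_symm,
    setIntegral_eq_of_subset_of_forall_sdiff_eq_zero polarCoord.open_target.measurableSet h_subset]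
  · refine setIntegral_congr_fun (measurableSet_Ioo.prod measurableSet_Ioo) fun p hp => ?_
    have hp_mem := (h_mem p).2 (by rw [abs_of_pos hp.1.1]; exact hp.1.2)
    rw [Set.indicator_of_mem hp_mem, Complex.polarCoord_symm_apply, bpt_eq_cos_add_sin_mul_I]
  · rintro p ⟨hp, hp_not⟩
    rw [polarCoord_target] at hp
    have hp_not_mem : Complex.polarCoord.symm p ∉ unitDisk := fun h =>
      hp_not ⟨⟨hp.1, (le_abs_self _).trans_lt ((h_mem p).1 h)⟩, hp.2⟩
    rw [Set.indicator_of_notMem hp_not_mem, smul_zero]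

theorem setIntegral_unitDisk_eq_integral_polar {E : Type*} [NormedAddCommGroup E]
    [NormedSpace ℝ E] {F : ℂ → E} (hF : Continuous F) :
    ∫ x in unitDisk, F x = ∫ r in (0 : ℝ)..1, ∫ θ in (0 : ℝ)..2 * π, r • F (r * bpt θ) := by
  have h_cont : Continuous fun p : ℝ × ℝ => p.1 • F (p.1 * bpt p.2) := by fun_prop
  have h_int : IntegrableOn (fun p : ℝ × ℝ => p.1 • F (p.1 * bpt p.2))
      (Set.Ioo (0 : ℝ) 1 ×ˢ Set.Ioo (-π) π) (volume.prod volume) :=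
    (h_cont.continuousOn.integrableOn_compact (isCompact_Icc.prod isCompact_Icc)).mono_set
      (Set.prod_mono Set.Ioo_subset_Icc_self Set.Ioo_subset_Icc_self)
  rw [setIntegral_unitDisk_eq_setIntegral_polar, Measure.volume_eq_prod,
    setIntegral_prod _ h_int, intervalIntegral.integral_of_le zero_le_one,
    integral_Ioc_eq_integral_Ioo]
  refine setIntegral_congr_fun measurableSet_Ioo fun r _ => ?_
  have h_periodic : Function.Periodic (fun θ : ℝ => r • F (r * bpt θ)) (2 * π) := fun θ => by
    simp only [periodic_bpt θ]
  have h_shift := h_periodic.intervalIntegral_add_eq (-π) 0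
  rw [zero_add, show -π + 2 * π = π by ring,
    intervalIntegral.integral_of_le (by linarith [pi_pos]), integral_Ioc_eq_integral_Ioo] at h_shift
  exact h_shift

theorem integral_integral_deriv_add_deriv {E : Type*} [NormedAddCommGroup E] [NormedSpace ℝ E]
    {f g : ℝ × ℝ → E} (hf : ContDiff ℝ 1 f) (hg : ContDiff ℝ 1 g) (a₁ a₂ b₁ b₂ : ℝ) :
    ∫ x in a₁..b₁, ∫ y in a₂..b₂, (deriv (fun s => f (s, y)) x + deriv (fun s => g (x, s)) y) =
      (((∫ x in a₁..b₁, g (x, b₂)) - ∫ x in a₁..b₁, g (x, a₂)) + ∫ y in a₂..b₂, f (b₁, y)) -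
        ∫ y in a₂..b₂, f (a₁, y) := by
  have hf_diff : Differentiable ℝ f := hf.differentiable one_ne_zero
  have hg_diff : Differentiable ℝ g := hg.differentiable one_ne_zero
  have h_fst (x y : ℝ) : deriv (fun s => f (s, y)) x = fderiv ℝ f (x, y) (1, 0) :=
    ((hf_diff (x, y)).hasFDerivAt.comp_hasDerivAt x
      ((hasDerivAt_id x).prodMk (hasDerivAt_const x y))).deriv
  have h_snd (x y : ℝ) : deriv (fun s => g (x, s)) y = fderiv ℝ g (x, y) (0, 1) :=
    ((hg_diff (x, y)).hasFDerivAt.comp_hasDerivAt y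
      ((hasDerivAt_const y x).prodMk (hasDerivAt_id y))).deriv
  have h_cont : Continuous fun p => fderiv ℝ f p (1, 0) + fderiv ℝ g p (0, 1) := by
    have := hf.continuous_fderiv one_ne_zero
    have := hg.continuous_fderiv one_ne_zero
    fun_prop
  simp only [h_fst, h_snd]
  exact integral2_divergence_prod_of_hasFDerivAt_off_countable f g (fderiv ℝ f) (fderiv ℝ g)
    a₁ a₂ b₁ b₂ ∅ Set.countable_empty hf.continuous.continuousOn hg.continuous.continuousOn
    (fun p _ => (hf_diff p).hasFDerivAt) (fun p _ => (hg_diff p).hasFDerivAt)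
    (h_cont.continuousOn.integrableOn_compact (isCompact_uIcc.prod isCompact_uIcc))

/-- Twice the Wirtinger derivative `∂V/∂z̄`. It annihilates holomorphic functions, and Stokes'
theorem on the disk takes its simplest complex form in terms of it. -/
def dbar (V : ℂ → ℂ) (z : ℂ) : ℂ := fderiv ℝ V z 1 + I * fderiv ℝ V z I

theorem map_add_I_mul_map_I_mul (L : ℂ →L[ℝ] ℂ) (w : ℂ) :
    L w + I * L (I * w) = conj w * (L 1 + I * L I) := by
  have h_map (v : ℂ) : L v = v.re * L 1 + v.im * L I := by
    conv_lhs => rw [← Complex.re_add_im v, ← mul_one (v.re : ℂ)]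
    simp only [← Complex.real_smul, map_add, map_smul]
  have h_conj : conj w = w.re - w.im * I := by
    apply Complex.ext <;> simp
  rw [h_map w, h_map (I * w), h_conj, Complex.I_mul_re, Complex.I_mul_im, Complex.ofReal_neg]
  linear_combination (w.im * L I) * Complex.I_sq

variable {V W : ℂ → ℂ} {U : ℂ → ℝ} {f : ℂ → ℂ} {z : ℂ}

theorem deriv_radial_add_deriv_angular (hV : DifferentiableAt ℝ V z) {r θ : ℝ}
    (hz : z = r * bpt θ) :
    deriv (fun s : ℝ => s * bpt θ * V (s * bpt θ)) r +
      deriv (fun s : ℝ => I * bpt s * V (r * bpt s)) θ = r • dbar V z := by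
  subst hz
  have h_r : HasDerivAt (fun s : ℝ => (s : ℂ) * bpt θ) (bpt θ) r := by
    simpa using (ofRealCLM.hasDerivAt (x := r)).mul_const (bpt θ)
  have h_θ : HasDerivAt (fun s : ℝ => (r : ℂ) * bpt s) (r • (I * bpt θ)) θ := by
    simpa [mul_comm] using (hasDerivAt_bpt θ).const_mul (r : ℂ)
  have h_wirtinger := map_add_I_mul_map_I_mul (fderiv ℝ V (r * bpt θ)) (bpt θ)
  have h_radial := (h_r.fun_mul (hV.hasFDerivAt.comp_hasDerivAt r h_r)).deriv
  have h_angular :=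
    (((hasDerivAt_bpt θ).const_mul I).fun_mul (hV.hasFDerivAt.comp_hasDerivAt θ h_θ)).deriv
  rw [map_smul, Complex.real_smul] at h_angular
  simp only [Function.comp_apply] at h_radial h_angular
  rw [h_radial, h_angular, Complex.real_smul, dbar]
  linear_combination bpt θ * V (r * bpt θ) * Complex.I_sq + r * bpt θ * h_wirtinger +
    r * (fderiv ℝ V (r * bpt θ) 1 + I * fderiv ℝ V (r * bpt θ) I) * bpt_mul_conj_bpt θ

theorem continuous_dbar (hV : ContDiff ℝ 1 V) : Continuous (dbar V) := by
  have := hV.continuous_fderiv one_ne_zero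
  unfold dbar
  fun_prop

theorem integral_dbar (hV : ContDiff ℝ 1 V) :
    ∫ x in unitDisk, dbar V x = ∫ θ in (0 : ℝ)..2 * π, bpt θ * V (bpt θ) := by
  have h_fst : ContDiff ℝ 1 fun p : ℝ × ℝ => (p.1 : ℂ) := ofRealCLM.contDiff.comp contDiff_fst
  have h_bpt : ContDiff ℝ 1 fun p : ℝ × ℝ => bpt p.2 := contDiff_bpt.comp contDiff_snd
  have h_V : ContDiff ℝ 1 fun p : ℝ × ℝ => V (p.1 * bpt p.2) := hV.comp (h_fst.mul h_bpt)
  have h_box := integral_integral_deriv_add_deriv ((h_fst.mul h_bpt).mul h_V)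
    ((contDiff_const (c := I)).mul h_bpt |>.mul h_V) 0 0 1 (2 * π)
  have h_bpt_two_pi : bpt (2 * π) = bpt 0 := by simpa using periodic_bpt 0
  have h_diff : Differentiable ℝ V := hV.differentiable one_ne_zero
  rw [setIntegral_unitDisk_eq_integral_polar (continuous_dbar hV)]
  simp only [← deriv_radial_add_deriv_angular (h_diff _) rfl]
  simpa [h_bpt_two_pi] using h_box

theorem dbar_mul (hV : DifferentiableAt ℝ V z) (hW : DifferentiableAt ℝ W z) :
    dbar (fun x => V x * W x) z = dbar V z * W z + V z * dbar W z := by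
  simp only [dbar, fderiv_fun_mul hV hW, add_apply, smul_apply, smul_eq_mul]
  ring

theorem dbar_eq_zero (hf : DifferentiableAt ℂ f z) : dbar f z = 0 := by
  rw [dbar, hf.fderiv_restrictScalars ℝ]
  simp only [ContinuousLinearMap.coe_restrictScalars', fderiv_eq_smul_deriv, smul_eq_mul]
  linear_combination deriv f z * Complex.I_sq

theorem dbar_conj (hf : DifferentiableAt ℂ f z) :
    dbar (fun x => conj (f x)) z = 2 * conj (deriv f z) := by
  have h_fderiv := (Complex.conjCLE.toContinuousLinearMap.hasFDerivAt.comp z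
    (hf.restrictScalars ℝ).hasFDerivAt).fderiv
  simp only [Function.comp_def, ContinuousLinearEquiv.coe_coe, Complex.conjCLE_apply] at h_fderiv
  rw [dbar, h_fderiv, hf.fderiv_restrictScalars ℝ]
  simp only [ContinuousLinearMap.comp_apply, ContinuousLinearMap.coe_restrictScalars',
    fderiv_eq_smul_deriv, smul_eq_mul, one_mul, ContinuousLinearEquiv.coe_coe,
    ContinuousAlgEquiv.coeCLE_apply, Complex.conjCAE_apply, map_mul, Complex.conj_I, neg_mul,
    mul_neg]
  linear_combination -conj (deriv f z) * Complex.I_sq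

theorem dbar_ofReal (hU : DifferentiableAt ℝ U z) :
    dbar (fun x => (U x : ℂ)) z = pd U 1 z + I * pd U I z := by
  have h_fderiv := (ofRealCLM.hasFDerivAt.comp z hU.hasFDerivAt).fderiv
  simp only [Function.comp_def, Complex.ofRealCLM_apply] at h_fderiv
  rw [dbar, h_fderiv]
  rfl

end Stokes

section Fourier

open Finset (range)
theorem norm_fourierCoeffOn_eq_of_hasDerivAt {a b : ℝ} (hab : a < b) {f f' : ℝ → ℂ}
    (hf : ∀ x ∈ Set.uIcc a b, HasDerivAt f (f' x) x) (hf' : IntervalIntegrable f' volume a b)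
    (h_ends : f b = f a) {n : ℤ} (hn : n ≠ 0) :
    ‖fourierCoeffOn hab f n‖ = (b - a) / (2 * π) * (1 / |(n : ℝ)|) * ‖fourierCoeffOn hab f' n‖ := by
  have h_length : ‖(b : ℂ) - a‖ = b - a := by
    rw [← Complex.ofReal_sub, Complex.norm_real, norm_of_nonneg (sub_nonneg.2 hab.le)]
  rw [fourierCoeffOn_of_hasDerivAt hab hn hf hf', h_ends, sub_self, mul_zero, zero_sub, norm_mul,
    norm_neg, norm_mul, h_length]
  simp only [norm_div, norm_one, norm_mul, norm_neg, Complex.norm_real, norm_of_nonneg pi_pos.le,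
    Complex.norm_I, mul_one, Complex.norm_intCast, Complex.norm_ofNat]
  ring

theorem summable_norm_fourierCoeffOn {a b : ℝ} (hab : a < b) {f f' : ℝ → ℂ}
    (hf : ∀ x ∈ Set.uIcc a b, HasDerivAt f (f' x) x)
    (hf' : MemLp f' 2 (volume.restrict (Set.Ioc a b))) (h_ends : f b = f a) :
    Summable fun n => ‖fourierCoeffOn hab f n‖ := by
  have h_inv_sq : Summable fun n : ℤ => 1 / (n : ℝ) ^ 2 :=
    Real.summable_one_div_int_pow.2 one_lt_two
  have h_sq := (hasSum_sq_fourierCoeffOn hab hf').summable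
  have hf'_int : IntervalIntegrable f' volume a b :=
    (intervalIntegrable_iff_integrableOn_Ioc_of_le hab.le).2 (hf'.integrable one_le_two)
  refine Summable.of_norm_bounded_eventually
    ((h_inv_sq.add h_sq).mul_left ((b - a) / (2 * π))) ?_
  filter_upwards [(Set.finite_singleton (0 : ℤ)).compl_mem_cofinite] with n hn
  rw [norm_norm, norm_fourierCoeffOn_eq_of_hasDerivAt hab hf hf'_int h_ends hn, mul_assoc,
    ← sq_abs (n : ℝ), ← one_div_pow]
  refine mul_le_mul_of_nonneg_left ?_ (div_nonneg (sub_nonneg.2 hab.le) two_pi_pos.le)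
  nlinarith [sq_nonneg (1 / |(n : ℝ)| - ‖fourierCoeffOn hab f' n‖),
    sq_nonneg (1 / |(n : ℝ)|), sq_nonneg ‖fourierCoeffOn hab f' n‖]

theorem hasSum_fourierCoeffOn_smul_fourier {a b : ℝ} (hab : a < b) {f : ℝ → ℂ}
    (hf : Continuous f) (h_periodic : Function.Periodic f (b - a))
    (h_sum : Summable (fourierCoeffOn hab f)) (x : ℝ) :
    HasSum (fun n => fourierCoeffOn hab f n • fourier n (x : AddCircle (b - a))) (f x) := by
  have : Fact (0 < b - a) := ⟨sub_pos.2 hab⟩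
  let F : C(AddCircle (b - a), ℂ) := ⟨h_periodic.lift, continuous_coinduced_dom.mpr hf⟩
  have h_coeff : fourierCoeff F = fourierCoeffOn hab f := by
    ext n
    rw [fourierCoeffOn_eq_integral, fourierCoeff_eq_intervalIntegral _ _ a, add_sub_cancel]
    rfl
  rw [← h_coeff] at h_sum ⊢
  exact has_pointwise_sum_fourier_series_of_summable h_sum (x : AddCircle (b - a))

/-- The `n`-th Fourier coefficient of the boundary values of `U`, read along `bpt`. -/
def circleCoeff (U : ℂ → ℝ) (n : ℤ) : ℂ := fourierCoeffOn two_pi_pos (fun θ => (U (bpt θ) : ℂ)) n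

theorem fourier_eq_bpt_zpow (n : ℤ) (θ : ℝ) :
    fourier n (θ : AddCircle (2 * π - 0)) = bpt θ ^ n := by
  have hπ : (π : ℂ) ≠ 0 := mod_cast pi_ne_zero
  rw [fourier_coe_apply, bpt, ← Complex.exp_int_mul]
  congr 1
  push_cast
  field_simp
  ring

variable {U : ℂ → ℝ}

theorem integral_bpt_zpow_mul (U : ℂ → ℝ) (n : ℤ) :
    ∫ θ in (0 : ℝ)..2 * π, bpt θ ^ (-n) * (U (bpt θ) : ℂ) = 2 * π * circleCoeff U n := by
  have hπ : (π : ℂ) ≠ 0 := mod_cast pi_ne_zero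
  rw [circleCoeff, fourierCoeffOn_eq_integral]
  simp only [fourier_eq_bpt_zpow, smul_eq_mul, Complex.real_smul]
  push_cast
  field_simp
  ring

theorem circleCoeff_zero (U : ℂ → ℝ) : circleCoeff U 0 = (bint U / (2 * π) : ℝ) := by
  have h := integral_bpt_zpow_mul U 0
  have hπ : (π : ℂ) ≠ 0 := mod_cast pi_ne_zero
  simp only [neg_zero, zpow_zero, one_mul, intervalIntegral.integral_ofReal] at h
  rw [bint, Complex.ofReal_div, h]
  push_cast
  field_simp

theorem circleCoeff_neg (U : ℂ → ℝ) (n : ℤ) : circleCoeff U (-n) = conj (circleCoeff U n) := by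
  have h_conj := congrArg conj (integral_bpt_zpow_mul U n)
  rw [← intervalIntegral.intervalIntegral_conj] at h_conj
  simp only [map_mul, map_zpow₀, Complex.conj_ofReal, ← Complex.inv_eq_conj (norm_bpt _),
    inv_zpow', map_ofNat, integral_bpt_zpow_mul] at h_conj
  exact mul_left_cancel₀ (mod_cast two_pi_pos.ne') h_conj

theorem integral_bpt_pow_mul (U : ℂ → ℝ) (n : ℕ) :
    ∫ θ in (0 : ℝ)..2 * π, bpt θ ^ n * (U (bpt θ) : ℂ) = 2 * π * conj (circleCoeff U n) := by
  rw [← circleCoeff_neg, ← integral_bpt_zpow_mul]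
  simp only [neg_neg, zpow_natCast]

theorem summable_norm_circleCoeff (hU : ContDiff ℝ 1 U) :
    Summable fun n => ‖circleCoeff U n‖ := by
  have hUb : ContDiff ℝ 1 fun θ => (U (bpt θ) : ℂ) :=
    Complex.ofRealCLM.contDiff.comp (hU.comp contDiff_bpt)
  have h_deriv : Continuous (deriv fun θ => (U (bpt θ) : ℂ)) := hUb.continuous_deriv le_rfl
  obtain ⟨M, hM⟩ := isCompact_Icc.exists_bound_of_continuousOn
    (h_deriv.continuousOn (s := Set.Icc 0 (2 * π)))
  have h_memLp : MemLp (deriv fun θ => (U (bpt θ) : ℂ)) 2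
      (volume.restrict (Set.Ioc 0 (2 * π))) :=
    MemLp.of_bound h_deriv.aestronglyMeasurable M <|
      (ae_restrict_mem measurableSet_Ioc).mono fun θ hθ => hM θ (Set.Ioc_subset_Icc_self hθ)
  have h_ends : (U (bpt (2 * π)) : ℂ) = U (bpt 0) := by rw [← periodic_bpt 0, zero_add]
  exact summable_norm_fourierCoeffOn two_pi_pos
    (fun θ _ => (hUb.differentiable one_ne_zero θ).hasDerivAt) h_memLp h_ends

theorem hasSum_circleCoeff_mul_zpow (hU : ContDiff ℝ 1 U) (θ : ℝ) :
    HasSum (fun n => circleCoeff U n * bpt θ ^ n) (U (bpt θ) : ℂ) := by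
  have h_cont : Continuous fun θ => (U (bpt θ) : ℂ) :=
    Complex.continuous_ofReal.comp (hU.continuous.comp continuous_bpt)
  have h_periodic : Function.Periodic (fun θ => (U (bpt θ) : ℂ)) (2 * π - 0) := fun θ => by
    simp only [sub_zero, periodic_bpt θ]
  simpa only [circleCoeff, fourier_eq_bpt_zpow, smul_eq_mul] using
    hasSum_fourierCoeffOn_smul_fourier two_pi_pos h_cont h_periodic
      (summable_norm_circleCoeff hU).of_norm θ

/-- The partial sum of order `N` of the analytic half `∑ n ≥ 0` of the Fourier series of the
boundary values of `U`, extended to a polynomial on `ℂ`. -/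
def analyticPart (U : ℂ → ℝ) (N : ℕ) (z : ℂ) : ℂ := ∑ k ∈ range N, circleCoeff U k * z ^ k

theorem differentiable_analyticPart (U : ℂ → ℝ) (N : ℕ) : Differentiable ℂ (analyticPart U N) := by
  unfold analyticPart
  fun_prop

theorem taylorCoeff_analyticPart (U : ℂ → ℝ) (N n : ℕ) :
    taylorCoeff (analyticPart U N) n = if n < N then circleCoeff U n else 0 :=
  taylorCoeff_sum_range (fun k => circleCoeff U k) N n

theorem tendsto_two_mul_re_analyticPart (hU : ContDiff ℝ 1 U) (θ : ℝ) :
    Tendsto (fun N => 2 * (analyticPart U N (bpt θ)).re) atTop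
      (nhds (U (bpt θ) + bint U / (2 * π))) := by
  have h_pair (n : ℕ) : circleCoeff U n * bpt θ ^ (n : ℤ) +
      circleCoeff U (-n) * bpt θ ^ (-(n : ℤ)) = (2 * (circleCoeff U n * bpt θ ^ n).re : ℝ) := by
    rw [circleCoeff_neg, zpow_neg, zpow_natCast, ← inv_pow, Complex.inv_eq_conj (norm_bpt θ),
      ← map_pow, ← map_mul, Complex.add_conj]
  have h_sum := (hasSum_circleCoeff_mul_zpow hU θ).nat_add_neg
  simp only [h_pair, zpow_zero, mul_one, circleCoeff_zero, ← Complex.ofReal_add] at h_sum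
  have h_tendsto := (Complex.hasSum_ofReal.1 h_sum).tendsto_sum_nat
  simpa only [analyticPart, Complex.re_sum, Finset.mul_sum] using h_tendsto

theorem re_analyticPart_le_tsum (hU : ContDiff ℝ 1 U) (N : ℕ) (θ : ℝ) :
    (analyticPart U N (bpt θ)).re ≤ ∑' k : ℕ, ‖circleCoeff U k‖ :=
  calc (analyticPart U N (bpt θ)).re ≤ ‖analyticPart U N (bpt θ)‖ := Complex.re_le_norm _
    _ ≤ ∑ k ∈ range N, ‖circleCoeff U k * bpt θ ^ k‖ := norm_sum_le _ _
    _ = ∑ k ∈ range N, ‖circleCoeff U k‖ := by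
        simp only [norm_mul, norm_pow, norm_bpt, one_pow, mul_one]
    _ ≤ ∑' k : ℕ, ‖circleCoeff U k‖ :=
        ((summable_norm_circleCoeff hU).comp_injective Nat.cast_injective).sum_le_tsum _
          fun _ _ => norm_nonneg _

end Fourier

section Dirichlet

open Finset (range)
variable {U : ℂ → ℝ}

theorem continuous_pd (hU : ContDiff ℝ 1 U) (v : ℂ) : Continuous (pd U v) := by
  have := hU.continuous_fderiv one_ne_zero
  unfold pd
  fun_prop

theorem continuous_gradSq (hU : ContDiff ℝ 1 U) : Continuous (gradSq U) :=
  ((continuous_pd hU 1).pow 2).add ((continuous_pd hU Complex.I).pow 2)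

theorem gradSq_nonneg (U : ℂ → ℝ) (x : ℂ) : 0 ≤ gradSq U x :=
  add_nonneg (sq_nonneg _) (sq_nonneg _)

theorem four_mul_re_dbar_mul_sub_le_gradSq (hU : ContDiff ℝ 1 U) (x w : ℂ) :
    4 * (dbar (fun y => (U y : ℂ)) x * w).re - 2 * (2 * conj w * w).re ≤ gradSq U x := by
  rw [dbar_ofReal (hU.differentiable one_ne_zero x)]
  simp only [gradSq, Complex.mul_re, Complex.add_re, Complex.add_im, Complex.ofReal_re,
    Complex.ofReal_im, Complex.mul_im, Complex.I_re, Complex.I_im, Complex.conj_re,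
    Complex.conj_im, Complex.re_ofNat, Complex.im_ofNat]
  nlinarith [sq_nonneg (pd U 1 x - 2 * w.re), sq_nonneg (pd U Complex.I x + 2 * w.im)]

theorem integral_dbar_mul {V f : ℂ → ℂ} (hV : ContDiff ℝ 1 V) (hf : Differentiable ℂ f) :
    ∫ x in unitDisk, dbar V x * f x =
      ∫ θ in (0 : ℝ)..2 * π, bpt θ * f (bpt θ) * V (bpt θ) := by
  have hf_real : ContDiff ℝ 1 f := hf.contDiff.restrict_scalars ℝ
  have h_dbar (x : ℂ) : dbar (fun y => V y * f y) x = dbar V x * f x := by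
    rw [dbar_mul (hV.differentiable one_ne_zero x) (hf_real.differentiable one_ne_zero x),
      dbar_eq_zero (hf x), mul_zero, add_zero]
  simp only [← h_dbar, integral_dbar (hV.mul hf_real)]
  congr! 2 with θ
  ring

theorem integral_bpt_mul_deriv_analyticPart_mul {N : ℕ} {ψ : ℝ → ℂ} (hψ : Continuous ψ)
    (h_coeff : ∀ k < N, ∫ θ in (0 : ℝ)..2 * π, bpt θ ^ k * ψ θ = 2 * π * conj (circleCoeff U k)) :
    ∫ θ in (0 : ℝ)..2 * π, bpt θ * deriv (analyticPart U N) (bpt θ) * ψ θ =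
      (2 * π * ∑ k ∈ range N, k * ‖circleCoeff U k‖ ^ 2 : ℝ) := by
  have hf := differentiable_analyticPart U N
  have h_sum := hasSum_taylorCoeff_mul_integral
    (differentiable_fun_id.fun_mul (hf.contDiff.differentiable_deriv_two)) hψ
  simp only [taylorCoeff_id_mul_deriv hf, taylorCoeff_analyticPart] at h_sum
  rw [h_sum.unique (hasSum_sum_of_ne_finset_zero (s := range N) fun k hk => by
    rw [if_neg (mt Finset.mem_range.2 hk), mul_zero, zero_mul])]
  push_cast
  rw [Finset.mul_sum]
  refine Finset.sum_congr rfl fun k hk => ?_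
  rw [if_pos (Finset.mem_range.1 hk), h_coeff k (Finset.mem_range.1 hk), ← Complex.mul_conj']
  ring

theorem integral_dbar_mul_deriv_analyticPart (hU : ContDiff ℝ 1 U) (N : ℕ) :
    ∫ x in unitDisk, dbar (fun y => (U y : ℂ)) x * deriv (analyticPart U N) x =
      (2 * π * ∑ k ∈ range N, k * ‖circleCoeff U k‖ ^ 2 : ℝ) := by
  have hf' := (differentiable_analyticPart U N).contDiff.differentiable_deriv_two
  refine (integral_dbar_mul (Complex.ofRealCLM.contDiff.comp hU) hf').trans ?_
  exact integral_bpt_mul_deriv_analyticPart_mul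
    (Complex.continuous_ofReal.comp (hU.continuous.comp continuous_bpt))
    fun k _ => integral_bpt_pow_mul U k

theorem integral_two_mul_conj_deriv_mul_deriv_analyticPart (U : ℂ → ℝ) (N : ℕ) :
    ∫ x in unitDisk, 2 * conj (deriv (analyticPart U N) x) * deriv (analyticPart U N) x =
      (2 * π * ∑ k ∈ range N, k * ‖circleCoeff U k‖ ^ 2 : ℝ) := by
  have hf := differentiable_analyticPart U N
  have hf_conj : ContDiff ℝ 1 fun z => conj (analyticPart U N z) :=
    Complex.conjCLE.contDiff.comp (hf.contDiff.restrict_scalars ℝ)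
  simp only [← dbar_conj (hf _)]
  rw [integral_dbar_mul hf_conj hf.contDiff.differentiable_deriv_two]
  refine integral_bpt_mul_deriv_analyticPart_mul
    (hf_conj.continuous.comp continuous_bpt) fun k hk => ?_
  rw [integral_bpt_pow_mul_conj hf, taylorCoeff_analyticPart, if_pos hk]

/-- The two integrals computed above are equal, so that expanding `|∂U - w|² ≥ 0` with
`w = (analyticPart U N)'` bounds the energy without recourse to the harmonic extension of `U`. -/
theorem four_pi_mul_sum_le_integral_gradSq (hU : ContDiff ℝ 1 U) (N : ℕ) :
    4 * π * ∑ k ∈ range N, k * ‖circleCoeff U k‖ ^ 2 ≤ ∫ x in unitDisk, gradSq U x := by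
  set w : ℂ → ℂ := deriv (analyticPart U N)
  set W : ℂ → ℂ := dbar fun y => (U y : ℂ)
  have hw : Continuous w :=
    (differentiable_analyticPart U N).contDiff.differentiable_deriv_two.continuous
  have hW : Continuous W := continuous_dbar (Complex.ofRealCLM.contDiff.comp hU)
  have h_Ww : IntegrableOn (fun x => W x * w x) unitDisk := integrableOn_unitDisk (by fun_prop)
  have h_ww : IntegrableOn (fun x => 2 * conj (w x) * w x) unitDisk :=
    integrableOn_unitDisk (by fun_prop)
  have h_Ww_re : ∫ x in unitDisk, (W x * w x).re = (∫ x in unitDisk, W x * w x).re :=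
    integral_re h_Ww
  have h_ww_re : ∫ x in unitDisk, (2 * conj (w x) * w x).re =
      (∫ x in unitDisk, 2 * conj (w x) * w x).re := integral_re h_ww
  calc 4 * π * ∑ k ∈ range N, k * ‖circleCoeff U k‖ ^ 2
      = 4 * (∫ x in unitDisk, W x * w x).re - 2 * (∫ x in unitDisk, 2 * conj (w x) * w x).re := by
        rw [integral_dbar_mul_deriv_analyticPart hU,
          integral_two_mul_conj_deriv_mul_deriv_analyticPart, Complex.ofReal_re]
        ring
    _ = ∫ x in unitDisk, (4 * (W x * w x).re - 2 * (2 * conj (w x) * w x).re) := by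
        rw [← h_Ww_re, ← h_ww_re, ← integral_const_mul, ← integral_const_mul]
        exact (integral_sub (h_Ww.re.const_mul 4) (h_ww.re.const_mul 2)).symm
    _ ≤ ∫ x in unitDisk, gradSq U x :=
        integral_mono ((h_Ww.re.const_mul 4).sub (h_ww.re.const_mul 2))
          (integrableOn_unitDisk (continuous_gradSq hU))
          fun x => four_mul_re_dbar_mul_sub_le_gradSq hU x (w x)

end Dirichlet

section LebedevMilin

open Finset (range)

variable {φ : ℂ → ℝ}

theorem tendsto_integral_exp_analyticPart_smul (hφ : ContDiff ℝ 1 φ) {E : Type*}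
    [NormedAddCommGroup E] [NormedSpace ℝ E] {ψ : ℝ → E} (hψ : Continuous ψ) :
    Tendsto (fun N => ∫ θ in (0 : ℝ)..2 * π, exp (2 * (analyticPart φ N (bpt θ)).re) • ψ θ) atTop
      (nhds (∫ θ in (0 : ℝ)..2 * π, exp (φ (bpt θ) + bint φ / (2 * π)) • ψ θ)) := by
  have hf (N : ℕ) := (differentiable_analyticPart φ N).continuous
  refine intervalIntegral.tendsto_integral_filter_of_dominated_convergence
    (fun θ => exp (2 * ∑' k : ℕ, ‖circleCoeff φ k‖) * ‖ψ θ‖)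
    (.of_forall fun N => ?_) (.of_forall fun N => .of_forall fun θ _ => ?_)
    (Continuous.intervalIntegrable (by fun_prop) _ _)
    (.of_forall fun θ _ => (tendsto_two_mul_re_analyticPart hφ θ).rexp.smul_const _)
  · have := hf N
    exact Continuous.aestronglyMeasurable (by fun_prop)
  · rw [norm_smul, norm_of_nonneg (exp_pos _).le]
    gcongr
    exact re_analyticPart_le_tsum hφ N θ

theorem sum_range_mul_norm_taylorCoeff_analyticPart_le (hφ : ContDiff ℝ 1 φ) (N M : ℕ) :
    ∑ k ∈ range M, k * ‖taylorCoeff (analyticPart φ N) k‖ ^ 2 ≤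
      (∫ x in unitDisk, gradSq φ x) / (4 * π) := by
  rw [le_div_iff₀ (by positivity), mul_comm]
  refine le_trans ?_ (four_pi_mul_sum_le_integral_gradSq hφ M)
  gcongr with k
  rw [taylorCoeff_analyticPart]
  split_ifs
  · exact le_rfl
  · rw [norm_zero]
    exact norm_nonneg _

theorem integral_exp_sq_sub_le (hφ : ContDiff ℝ 1 φ) :
    (bint fun x => exp (φ x)) ^ 2 - ‖∫ θ in (0 : ℝ)..2 * π, exp (φ (bpt θ)) • bpt θ‖ ^ 2 ≤
      4 * π ^ 2 * exp (bint φ / π + (∫ x in unitDisk, gradSq φ x) / (4 * π)) := by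
  set m := bint φ / (2 * π) with hm
  set S := (∫ x in unitDisk, gradSq φ x) / (4 * π)
  have h_mass := tendsto_integral_exp_analyticPart_smul hφ (continuous_const (y := (1 : ℝ)))
  have h_center := tendsto_integral_exp_analyticPart_smul hφ continuous_bpt
  simp only [smul_eq_mul, mul_one] at h_mass
  have h_zero (N : ℕ) : (analyticPart φ (N + 1) 0).re = m := by
    rw [← taylorCoeff_zero (analyticPart φ (N + 1)), taylorCoeff_analyticPart,
      if_pos N.succ_pos, Nat.cast_zero, circleCoeff_zero, Complex.ofReal_re]
  have h_limit := le_of_tendsto' (((h_mass.pow 2).sub (h_center.norm.pow 2)).comp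
    (tendsto_add_atTop_nat 1)) fun N => by
      have h := integral_exp_re_sq_sub_le (differentiable_analyticPart φ (N + 1))
        (sum_range_mul_norm_taylorCoeff_analyticPart_le hφ (N + 1))
      rw [h_zero] at h
      simpa only [Function.comp_apply, Complex.real_smul] using h
  simp only [← hm, exp_add _ m, mul_comm _ (exp m), mul_smul, intervalIntegral.integral_const_mul,
    intervalIntegral.integral_smul, norm_smul, norm_of_nonneg (exp_pos m).le] at h_limit
  have h_two_m : bint φ / π = 2 * m := by
    rw [hm]
    field_simp
  have h_exp : exp (4 * m + S) = exp m ^ 2 * exp (2 * m + S) := by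
    rw [← exp_nat_mul, ← exp_add]
    ring_nf
  rw [h_two_m]
  refine le_of_mul_le_mul_left ?_ (pow_pos (exp_pos m) 2)
  rw [bint]
  linear_combination h_limit + 4 * π ^ 2 * h_exp

end LebedevMilin

section LowerBound

variable {K h u : ℂ → ℝ}

theorem gradSq_div_const (u : ℂ → ℝ) (c : ℝ) (x : ℂ) :
    gradSq (fun y => u y / c) x = gradSq u x / c ^ 2 := by
  have h_fderiv : fderiv ℝ (fun y => u y / c) x = c⁻¹ • fderiv ℝ u x := by
    simpa only [div_eq_inv_mul, Pi.smul_def, smul_eq_mul] using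
      congrFun (fderiv_const_smul_field (𝕜 := ℝ) (f := u) c⁻¹) x
  simp only [gradSq, pd, h_fderiv, smul_apply, smul_eq_mul]
  ring

theorem integral_smul_bpt_eq_zero {w : ℂ → ℝ} (hw : Continuous w)
    (h_re : bint (fun x => x.re * w x) = 0) (h_im : bint (fun x => x.im * w x) = 0) :
    ∫ θ in (0 : ℝ)..2 * π, w (bpt θ) • bpt θ = 0 := by
  have h_int : IntervalIntegrable (fun θ => w (bpt θ) • bpt θ) volume 0 (2 * π) :=
    ((hw.comp continuous_bpt).smul continuous_bpt).intervalIntegrable _ _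
  have h_re_comm := Complex.reCLM.intervalIntegral_comp_comm h_int
  have h_im_comm := Complex.imCLM.intervalIntegral_comp_comm h_int
  simp only [Complex.reCLM_apply, Complex.imCLM_apply, Complex.smul_re, Complex.smul_im,
    smul_eq_mul, mul_comm (w _)] at h_re_comm h_im_comm
  exact Complex.ext (h_re_comm.symm.trans h_re) (h_im_comm.symm.trans h_im)

theorem le_bint_of_centered (hu : ContDiff ℝ 1 u)
    (h_mass : bint (fun x => exp (u x / 2)) = 1)
    (h_re : bint (fun x => x.re * exp (u x / 2)) = 0)
    (h_im : bint (fun x => x.im * exp (u x / 2)) = 0) :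
    -(2 * π * log (4 * π ^ 2)) - (∫ x in unitDisk, gradSq u x) / 8 ≤ bint u := by
  have h_center := integral_smul_bpt_eq_zero
    (continuous_exp.comp (hu.continuous.div_const 2)) h_re h_im
  have h_bint : bint (fun x => u x / 2) = bint u / 2 := intervalIntegral.integral_div _ _
  have h_ineq := integral_exp_sq_sub_le (hu.div_const 2)
  simp only [Function.comp_apply] at h_center
  simp only [h_mass, h_center, h_bint, gradSq_div_const, integral_div, norm_zero, one_pow,
    zero_pow two_ne_zero, sub_zero] at h_ineq
  have h_log := log_le_log one_pos h_ineq
  rw [log_one, log_mul (by positivity) (exp_ne_zero _), log_exp] at h_log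
  have h_scaled := mul_le_mul_of_nonneg_left h_log two_pi_pos.le
  have h_cancel : 2 * π * (log (4 * π ^ 2) +
      (bint u / 2 / π + (∫ x in unitDisk, gradSq u x) / 2 ^ 2 / (4 * π))) =
      2 * π * log (4 * π ^ 2) + bint u + (∫ x in unitDisk, gradSq u x) / 8 := by
    field_simp
    ring
  rw [mul_zero, h_cancel] at h_scaled
  linarith

theorem integral_two_mul_add_nderiv (hu : ContDiff ℝ 1 u) :
    ∫ x in unitDisk, (2 * u x + nderiv u x) = bint u := by
  have hu_ofReal : ContDiff ℝ 1 fun z => (u z : ℂ) := Complex.ofRealCLM.contDiff.comp hu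
  have h_conj : ContDiff ℝ 1 fun z : ℂ => conj z := Complex.conjCLE.contDiff
  have h_dbar (x : ℂ) : (dbar (fun z => (u z : ℂ) * conj z) x).re = 2 * u x + nderiv u x := by
    rw [dbar_mul (hu_ofReal.differentiable one_ne_zero x) (h_conj.differentiable one_ne_zero x),
      dbar_ofReal (hu.differentiable one_ne_zero x), dbar_conj differentiableAt_fun_id]
    simp only [nderiv, deriv_id'', map_one, mul_one, Complex.add_re, Complex.mul_re,
      Complex.ofReal_re, Complex.I_re, zero_mul, Complex.I_im, Complex.ofReal_im, mul_zero,
      sub_self, add_zero, Complex.conj_re, Complex.add_im, Complex.mul_im, one_mul, zero_add,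
      Complex.conj_im, mul_neg, sub_neg_eq_add, Complex.re_ofNat, Complex.im_ofNat, sub_zero]
    ring
  have h_circle (θ : ℝ) : bpt θ * ((u (bpt θ) : ℂ) * conj (bpt θ)) = u (bpt θ) := by
    rw [mul_left_comm, bpt_mul_conj_bpt, mul_one]
  have h_re : ∫ x in unitDisk, (dbar (fun z => (u z : ℂ) * conj z) x).re =
      (∫ x in unitDisk, dbar (fun z => (u z : ℂ) * conj z) x).re :=
    integral_re (integrableOn_unitDisk (continuous_dbar (hu_ofReal.mul h_conj)))
  simpa only [bint, integral_dbar (hu_ofReal.mul h_conj), h_dbar, h_circle,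
    intervalIntegral.integral_ofReal, Complex.ofReal_re] using h_re

theorem nderiv_le_half_add_half_gradSq (u : ℂ → ℝ) {x : ℂ} (hx : ‖x‖ ≤ 1) :
    nderiv u x ≤ 1 / 2 + gradSq u x / 2 := by
  have h_normSq : x.re * x.re + x.im * x.im ≤ 1 := by
    rw [← Complex.normSq_apply, Complex.normSq_eq_norm_sq]
    exact pow_le_one₀ (norm_nonneg x) hx
  rw [nderiv, gradSq]
  nlinarith [sq_nonneg (x.re - pd u 1 x), sq_nonneg (x.im - pd u Complex.I x)]

theorem measureReal_unitDisk : volume.real unitDisk = π := by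
  simp [unitDisk, Measure.real]

theorem bint_le_two_mul_integral_add (hu : ContDiff ℝ 1 u) :
    bint u ≤ 2 * (∫ x in unitDisk, u x) + π / 2 + (∫ x in unitDisk, gradSq u x) / 2 := by
  have hu_cont := hu.continuous
  have h_pd := continuous_pd hu
  have h_grad := continuous_gradSq hu
  have h_nderiv : Continuous (nderiv u) := by
    unfold nderiv
    fun_prop
  calc bint u = ∫ x in unitDisk, (2 * u x + nderiv u x) := (integral_two_mul_add_nderiv hu).symm
    _ ≤ ∫ x in unitDisk, (2 * u x + 1 / 2 + gradSq u x / 2) := by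
        refine setIntegral_mono_on (integrableOn_unitDisk (by fun_prop))
          (integrableOn_unitDisk (by fun_prop)) measurableSet_ball fun x hx => ?_
        rw [add_assoc]
        gcongr
        exact nderiv_le_half_add_half_gradSq u (mem_ball_zero_iff.1 hx).le
    _ = 2 * (∫ x in unitDisk, u x) + π / 2 + (∫ x in unitDisk, gradSq u x) / 2 := by
        rw [integral_add (integrableOn_unitDisk (by fun_prop))
            (integrableOn_unitDisk (by fun_prop)),
          integral_add (integrableOn_unitDisk (by fun_prop))
            (integrableOn_unitDisk (by fun_prop)),
          integral_const_mul, integral_div 2 (gradSq u), setIntegral_const,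
          measureReal_unitDisk, smul_eq_mul]
        ring

theorem integral_gradSq_sub_le_disk_energy (hK : ContinuousOn K closedUnitDisk)
    (hu : ContDiff ℝ 1 u) {ε : ℝ} (hε : ∀ x ∈ unitDisk, 2 * K x ≤ ε) :
    (1 + ε) / 2 * (∫ x in unitDisk, gradSq u x) - ε * (∫ x in unitDisk, u x) ≤
      (∫ x in unitDisk, ((1 / 2) * gradSq u x - 2 * K x * exp (u x))) + ε * Tfun u := by
  have hu_cont := hu.continuous
  have h_grad := continuous_gradSq hu
  have h_Kexp : IntegrableOn (fun x => 2 * K x * exp (u x)) unitDisk := by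
    refine (ContinuousOn.integrableOn_compact (isCompact_closedBall (0 : ℂ) 1) ?_).mono_set
      Metric.ball_subset_closedBall
    exact (continuousOn_const.mul hK).mul (continuous_exp.comp hu_cont).continuousOn
  have h_left₁ : IntegrableOn (fun x => (1 + ε) / 2 * gradSq u x) unitDisk :=
    integrableOn_unitDisk (by fun_prop)
  have h_left₂ : IntegrableOn (fun x => ε * u x) unitDisk := integrableOn_unitDisk (by fun_prop)
  have h_right₁ : IntegrableOn (fun x => (1 / 2) * gradSq u x - 2 * K x * exp (u x)) unitDisk :=
    (integrableOn_unitDisk (by fun_prop)).sub h_Kexp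
  have h_right₂ : IntegrableOn (fun x => ε * ((1 / 2) * gradSq u x + exp (u x) - u x)) unitDisk :=
    integrableOn_unitDisk (by fun_prop)
  rw [Tfun, ← integral_const_mul, ← integral_const_mul, ← integral_const_mul,
    ← integral_sub h_left₁ h_left₂, ← integral_add h_right₁ h_right₂]
  refine setIntegral_mono_on (h_left₁.sub h_left₂) (h_right₁.add h_right₂) measurableSet_ball
    fun x hx => ?_
  have h_coeff : 0 ≤ (ε - 2 * K x) * exp (u x) :=
    mul_nonneg (sub_nonneg.2 (hε x hx)) (exp_pos _).le
  linear_combination h_coeff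

theorem two_mul_bint_sub_le_boundary_energy (hh : Continuous fun θ => h (bpt θ)) {M : ℝ}
    (hM : ∀ θ ∈ Set.Icc 0 (2 * π), h (bpt θ) ≤ M) (hu : Continuous u) :
    2 * bint u - 4 * M * bint (fun x => exp (u x / 2)) ≤
      bint fun x => 2 * u x - 4 * h x * exp (u x / 2) := by
  have h_right : Continuous fun θ => 2 * u (bpt θ) - 4 * h (bpt θ) * exp (u (bpt θ) / 2) :=
    .sub (by fun_prop) ((continuous_const.mul hh).mul (by fun_prop))
  unfold bint
  rw [← intervalIntegral.integral_const_mul, ← intervalIntegral.integral_const_mul,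
    ← intervalIntegral.integral_sub (Continuous.intervalIntegrable (by fun_prop) _ _)
      (Continuous.intervalIntegrable (by fun_prop) _ _)]
  refine intervalIntegral.integral_mono_on two_pi_pos.le
    (Continuous.intervalIntegrable (by fun_prop) _ _)
    (h_right.intervalIntegrable _ _) fun θ hθ => ?_
  beta_reduce
  gcongr
  exact hM θ hθ

theorem le_Ieps_of_centered (hK : ContinuousOn K closedUnitDisk)
    (hh : Continuous fun θ => h (bpt θ)) {M ε : ℝ}
    (hM_nonneg : 0 ≤ M) (hM : ∀ θ ∈ Set.Icc 0 (2 * π), h (bpt θ) ≤ M)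
    (hε : ε ∈ Set.Icc (-(1 / 20)) 0) (hKε : ∀ x ∈ unitDisk, 2 * K x ≤ ε)
    (hu : ContDiff ℝ 1 u) (h_mass : bint (fun x => exp (u x / 2)) = 1)
    (h_re : bint (fun x => x.re * exp (u x / 2)) = 0)
    (h_im : bint (fun x => x.im * exp (u x / 2)) = 0) :
    (1 / 5) * (∫ x in unitDisk, gradSq u x) - 2 * (3 * (2 * π * log (4 * π ^ 2)) + π + 4 * M) ≤
      Ieps K h ε u := by
  obtain ⟨hε_lower, hε_upper⟩ := hε
  have h_disk := integral_gradSq_sub_le_disk_energy hK hu hKε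
  have h_bdry := two_mul_bint_sub_le_boundary_energy hh hM hu.continuous
  have h_bint_lower := le_bint_of_centered hu h_mass h_re h_im
  have h_bint_upper := bint_le_two_mul_integral_add hu
  have hE : 0 ≤ ∫ x in unitDisk, gradSq u x := integral_nonneg (gradSq_nonneg u)
  have hL : 0 ≤ 2 * π * log (4 * π ^ 2) :=
    mul_nonneg two_pi_pos.le (log_nonneg (by nlinarith [pi_gt_three]))
  rw [h_mass, mul_one] at h_bdry
  rw [Ieps, Ifun, le_div_iff₀ (by linarith)]
  set E := ∫ x in unitDisk, gradSq u x
  set m := ∫ x in unitDisk, u x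
  set b := bint u
  set L := 2 * π * log (4 * π ^ 2)
  have h_mean : -ε * (b / 2 - π / 4 - E / 4) ≤ -ε * m :=
    mul_le_mul_of_nonneg_left (by linarith) (by linarith)
  have h_bdry_mean : (2 - ε / 2) * (-L - E / 8) ≤ (2 - ε / 2) * b :=
    mul_le_mul_of_nonneg_left (by linarith) (by linarith)
  have hE_coeff : 0 ≤ (1 / 20 + (13 / 16 - 1 / 5) * ε) * E := mul_nonneg (by linarith) hE
  have hL_coeff : 0 ≤ (1 + ε / 2) * L := mul_nonneg (by linarith) hL
  have hπ_coeff : 0 ≤ (1 + ε / 4) * π := mul_nonneg (by linarith) pi_pos.le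
  have h_const : 0 ≤ (1 + 2 * ε) * (3 * L + π + 4 * M) := mul_nonneg (by linarith) (by positivity)
  linarith

end LowerBound

theorem linking_lower_bound_general (K h : ℂ → ℝ) (hK : ContinuousOn K closedUnitDisk)
    (hKneg : ∀ x ∈ closedUnitDisk, K x < 0) (hh : Continuous fun θ => h (bpt θ)) :
    ∃ δ₀ ∈ Set.Ioo (0 : ℝ) 1, ∃ C : ℝ, ∀ ε ∈ Set.Icc (-δ₀) 0, ∀ u : ℂ → ℝ, ContDiff ℝ 1 u →
      bint (fun x => exp (u x / 2)) = 1 →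
      bint (fun x => x.re * exp (u x / 2)) = 0 →
      bint (fun x => x.im * exp (u x / 2)) = 0 →
      (1 / 5) * (∫ x in unitDisk, gradSq u x) + C ≤ Ieps K h ε u := by
  obtain ⟨x₀, hx₀, hK_max⟩ := (isCompact_closedBall (0 : ℂ) 1).exists_isMaxOn
    ⟨0, Metric.mem_closedBall_self zero_le_one⟩ hK
  obtain ⟨M, hM⟩ := isCompact_Icc.exists_bound_of_continuousOn
    (hh.continuousOn (s := Set.Icc 0 (2 * π)))
  have hM_nonneg : 0 ≤ M := (norm_nonneg _).trans (hM 0 ⟨le_rfl, two_pi_pos.le⟩)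
  have hK₀ : K x₀ < 0 := hKneg x₀ hx₀
  refine ⟨min (1 / 20) (-2 * K x₀), ⟨lt_min (by norm_num) (by linarith),
    (min_le_left _ _).trans_lt (by norm_num)⟩,
    -(2 * (3 * (2 * π * log (4 * π ^ 2)) + π + 4 * M)), ?_⟩
  intro ε ⟨hε_lower, hε_upper⟩ u hu h_mass h_re h_im
  rw [neg_le, le_min_iff] at hε_lower
  refine le_Ieps_of_centered hK hh hM_nonneg (fun θ hθ => (le_abs_self _).trans (hM θ hθ))
    ⟨by linarith, hε_upper⟩ (fun x hx => ?_) hu h_mass h_re h_im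
  have hKx : K x ≤ K x₀ := hK_max (Metric.ball_subset_closedBall hx)
  linarith

/-- Coercive lower bound for I_ε on the barycenter-constrained set, for ε ∈ (−δ, −δ/2). -/
theorem linking_lower_bound
    (K h : ℂ → ℝ)
    (hK : ContDiff ℝ 2 K)
    (hKneg : ∀ x ∈ closedUnitDisk, K x < 0)
    (hh : ContDiff ℝ 2 (fun θ => h (bpt θ))) :
    ∃ δ₀ ∈ Set.Ioo (0:ℝ) 1, ∀ δ ∈ Set.Ioo (0:ℝ) δ₀, ∃ C : ℝ,
      ∀ ε ∈ Set.Ioo (-δ) (-δ/2), ∀ u : ℂ → ℝ, ContDiff ℝ 1 u →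
        bint (fun x => Real.exp (u x / 2)) = 1 →
        bint (fun x => x.re * Real.exp (u x / 2)) = 0 →
        bint (fun x => x.im * Real.exp (u x / 2)) = 0 →
        (1/5) * (∫ x in unitDisk, gradSq u x) + C ≤ Ieps K h ε u := by
  obtain ⟨δ₀, hδ₀, C, hC⟩ :=
    linking_lower_bound_general K h hK.continuous.continuousOn hKneg hh.continuous
  exact ⟨δ₀, hδ₀, fun δ hδ => ⟨C, fun ε hε u =>
    hC ε ⟨by linarith [hε.1, hδ.2], by linarith [hε.2, hδ.1]⟩ u⟩⟩

end
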